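/- arXiv:1906.07121 — 4 statements merged into one kernel-verified Lean document; each statement's English description precedes it below -/
import Mathlib

section
/- Let 𝒪 be an order of discriminant Δ in an imaginary quadratic field and N a positive integer. Then the cardinality of the unit group (𝒪/N𝒪)^× equals N² · ∏_{ℓ ∣ N} (1 − (Δ/ℓ)·(1/ℓ)) · (1 − 1/ℓ), where (Δ/ℓ) denotes the Kronecker symbol and the product runs over the distinct primes ℓ dividing N. -/
/-- The Kronecker symbol `(Δ/ℓ)` for `ℓ` prime: agrees with the Legendre/Jacobi symbol
at odd primes, with the standard extension at `ℓ = 2`. -/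
def kroneckerSym (Δ : ℤ) (ℓ : ℕ) : ℤ :=
  if ℓ = 2 then (if Δ % 2 = 0 then 0 else if Δ % 8 = 1 ∨ Δ % 8 = 7 then 1 else -1)
  else jacobiSym Δ ℓ

/-!
An element of a commutative ring `A` is a unit modulo `N` exactly when it is a unit modulo every
prime `ℓ ∣ N`, so by the Chinese remainder theorem the proportion of units in `A / N` is the product
over `ℓ ∣ N` of the proportions of units in `A / ℓ`. Let `A = ℤ[τ]` with `τ ^ 2 = a + b τ`, of
discriminant `Δ = b ^ 2 + 4 a`. The non-units of `A / ℓ = 𝔽_ℓ[τ]` are the zeros of the norm form,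
namely `0` and the elements `y (τ - t)` with `y ≠ 0` and `t` a root of `t ^ 2 = a + b t` in `𝔽_ℓ`.
There are `1 + (Δ/ℓ)` such roots, by completing the square when `ℓ` is odd and by inspection when
`ℓ = 2`, which leaves `(ℓ - 1) (ℓ - (Δ/ℓ))` units among `ℓ ^ 2` elements.
-/

section UnitFraction

/-- The proportion of units in a finite monoid; the value is `0` when the monoid is infinite. -/
noncomputable def unitFraction (M : Type*) [Monoid M] : ℚ :=
  Nat.card Mˣ / Nat.card M

theorem unitFraction_congr {M N : Type*} [Monoid M] [Monoid N] (e : M ≃* N) :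
    unitFraction M = unitFraction N := by
  rw [unitFraction, unitFraction, Nat.card_congr e.toEquiv,
    Nat.card_congr (Units.mapEquiv e).toEquiv]

theorem card_units_eq_card_mul_unitFraction (M : Type*) [Monoid M] [Finite M] :
    (Nat.card Mˣ : ℚ) = Nat.card M * unitFraction M :=
  (mul_div_cancel₀ _ (Nat.cast_ne_zero.mpr Nat.card_pos.ne')).symm

theorem unitFraction_pi {ι : Type*} [Fintype ι] (M : ι → Type*) [∀ i, Monoid (M i)] :
    unitFraction (∀ i, M i) = ∏ i, unitFraction (M i) := by
  simp only [unitFraction, Nat.card_congr MulEquiv.piUnits.toEquiv, Nat.card_pi, Nat.cast_prod,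
    Finset.prod_div_distrib]

variable {R S : Type*} [Ring R] [Ring S]

/-- For a local homomorphism `f`, the units mapping to `1` are the elements `1 + x` with
`f x = 0`. -/
noncomputable def kerUnitsMapEquivKer (f : R →+* S) [IsLocalHom f] :
    (Units.map (f : R →* S)).ker ≃ (f : R →+ S).ker where
  toFun u := ⟨(u : Rˣ) - 1, by
    have hu : f (u : Rˣ) = 1 := congrArg Units.val u.2
    simp [AddMonoidHom.mem_ker, hu]⟩
  invFun x :=
    have hx : f (1 + x) = 1 := by rw [map_add, map_one, show f x = 0 from x.2, add_zero]
    ⟨(isUnit_of_map_unit f (1 + x : R) (hx ▸ isUnit_one)).unit, Units.ext hx⟩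
  left_inv u := Subtype.ext (Units.ext (add_sub_cancel _ _))
  right_inv x := Subtype.ext (add_sub_cancel_left _ _)

theorem card_units_mul_card_of_surjective (f : R →+* S) [IsLocalHom f]
    (hf : Function.Surjective f) :
    Nat.card Rˣ * Nat.card S = Nat.card Sˣ * Nat.card R := by
  have hunits : Function.Surjective (Units.map (f : R →* S)) := fun v ↦ by
    obtain ⟨x, hx⟩ := hf v
    have hxu : IsUnit x := isUnit_of_map_unit f x (hx ▸ v.isUnit)
    exact ⟨hxu.unit, Units.ext hx⟩
  have hRcard : Nat.card (f : R →+ S).ker * Nat.card S = Nat.card R := by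
    rw [← (f : R →+ S).ker.card_mul_index, AddSubgroup.index_ker,
      AddMonoidHom.range_eq_top_of_surjective _ hf, AddSubgroup.card_top]
  have hRunits : Nat.card (f : R →+ S).ker * Nat.card Sˣ = Nat.card Rˣ := by
    rw [← Nat.card_congr (kerUnitsMapEquivKer f), ← (Units.map (f : R →* S)).ker.card_mul_index,
      Subgroup.index_ker, MonoidHom.range_eq_top_of_surjective _ hunits, Subgroup.card_top]
  rw [← hRcard, ← hRunits]
  ring

theorem unitFraction_eq_of_surjective [Finite R] (f : R →+* S) [IsLocalHom f]
    (hf : Function.Surjective f) : unitFraction R = unitFraction S := by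
  have : Finite S := .of_surjective f hf
  rw [unitFraction, unitFraction, div_eq_div_iff (Nat.cast_ne_zero.mpr Nat.card_pos.ne')
    (Nat.cast_ne_zero.mpr Nat.card_pos.ne')]
  exact_mod_cast card_units_mul_card_of_surjective f hf

end UnitFraction

section Quotient

variable {A : Type*} [CommRing A]

theorem isUnit_quotient_mk_span_singleton_iff {x r : A} :
    IsUnit (Ideal.Quotient.mk (Ideal.span {r}) x) ↔ IsCoprime x r := by
  constructor
  · intro h
    obtain ⟨y, hy⟩ := h.exists_left_inv
    obtain ⟨y, rfl⟩ := Ideal.Quotient.mk_surjective y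
    rw [← map_mul, ← map_one (Ideal.Quotient.mk _), Ideal.Quotient.eq,
      Ideal.mem_span_singleton] at hy
    obtain ⟨z, hz⟩ := hy
    exact ⟨y, -z, by linear_combination hz⟩
  · rintro ⟨y, z, h⟩
    refine .of_mul_eq_one_right (Ideal.Quotient.mk _ y) ?_
    rw [← map_mul, ← map_one (Ideal.Quotient.mk _), Ideal.Quotient.eq, Ideal.mem_span_singleton]
    exact ⟨-z, by linear_combination h⟩

theorem unitFraction_quotient_span_prod_pow {ι : Type*} [Fintype ι] {r : ι → A}
    (hr : Pairwise (Function.onFun IsCoprime r)) {e : ι → ℕ} (he : ∀ i, e i ≠ 0)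
    [Finite (A ⧸ Ideal.span {∏ i, r i ^ e i})] :
    unitFraction (A ⧸ Ideal.span {∏ i, r i ^ e i}) =
      ∏ i, unitFraction (A ⧸ Ideal.span {r i}) := by
  have hdvd (i : ι) : r i ∣ ∏ i, r i ^ e i :=
    (dvd_pow_self _ (he i)).trans (Finset.dvd_prod_of_mem _ (Finset.mem_univ i))
  let f : A ⧸ Ideal.span {∏ i, r i ^ e i} →+* ∀ i, A ⧸ Ideal.span {r i} :=
    RingHom.pi fun i ↦ Ideal.Quotient.factor (Ideal.span_singleton_le_span_singleton.mpr (hdvd i))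
  have hsurj : Function.Surjective f := fun y ↦ by
    obtain ⟨x, hx⟩ := Ideal.pi_quotient_surjective
      (fun i j hij ↦ (Ideal.isCoprime_span_singleton_iff _ _).mpr (hr hij)) y
    exact ⟨Ideal.Quotient.mk _ x, funext hx⟩
  have : IsLocalHom f := ⟨fun x hx ↦ by
    obtain ⟨x, rfl⟩ := Ideal.Quotient.mk_surjective x
    rw [Pi.isUnit_iff] at hx
    exact isUnit_quotient_mk_span_singleton_iff.mpr <| .prod_right fun i _ ↦
      (isUnit_quotient_mk_span_singleton_iff.mp (hx i)).pow_right⟩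
  rw [unitFraction_eq_of_surjective f hsurj, unitFraction_pi]

theorem unitFraction_quotient_span_natCast {n : ℕ} (hn : n ≠ 0)
    [Finite (A ⧸ Ideal.span {(n : A)})] :
    unitFraction (A ⧸ Ideal.span {(n : A)}) =
      ∏ ℓ ∈ n.primeFactors, unitFraction (A ⧸ Ideal.span {(ℓ : A)}) := by
  have hfact : (n : A) = ∏ ℓ : n.primeFactors, (ℓ : A) ^ n.factorization ℓ := by
    rw [Finset.prod_coe_sort n.primeFactors fun ℓ ↦ (ℓ : A) ^ n.factorization ℓ]
    exact_mod_cast congrArg (Nat.cast (R := A)) (Nat.prod_primeFactors_pow_factorization hn)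
  have hcop : Pairwise (Function.onFun IsCoprime fun ℓ : n.primeFactors ↦ (ℓ : A)) :=
    fun p q hpq ↦ ((Nat.coprime_primes (Nat.prime_of_mem_primeFactors p.2)
      (Nat.prime_of_mem_primeFactors q.2)).mpr (Subtype.coe_ne_coe.mpr hpq)).cast
  have hexp (ℓ : n.primeFactors) : n.factorization ℓ ≠ 0 := Finsupp.mem_support_iff.mp ℓ.2
  have : Finite (A ⧸ Ideal.span {∏ ℓ : n.primeFactors, (ℓ : A) ^ n.factorization ℓ}) :=
    hfact ▸ inferInstance
  rw [hfact, unitFraction_quotient_span_prod_pow hcop hexp,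
    Finset.prod_coe_sort n.primeFactors fun ℓ ↦ unitFraction (A ⧸ Ideal.span {(ℓ : A)})]

end Quotient

section FiniteField

open QuadraticAlgebra

theorem natCard_quadraticAlgebra {R : Type*} (a b : R) :
    Nat.card (QuadraticAlgebra R a b) = Nat.card R ^ 2 := by
  rw [Nat.card_congr (equivProd a b), Nat.card_prod, sq]

variable {F : Type*} [Field F]

theorem setOf_norm_eq_zero (a b : F) :
    {z : QuadraticAlgebra F a b | norm z = 0} =
      insert 0 ((fun p : F × F ↦ ⟨-(p.1 * p.2), p.1⟩) ''
        ({0}ᶜ ×ˢ {t | t ^ 2 = a + b * t})) := by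
  ext ⟨x, y⟩
  simp only [norm_def, Set.mem_ofPred_eq, Set.mem_insert_iff, Set.mem_image, Set.mem_prod,
    Set.mem_compl_iff, Set.mem_singleton_iff, Prod.exists, QuadraticAlgebra.ext_iff, re_zero,
    im_zero]
  constructor
  · intro h
    rcases eq_or_ne y 0 with rfl | hy
    · exact .inl ⟨by simpa using h, rfl⟩
    · refine .inr ⟨y, -x / y, ⟨hy, ?_⟩, by field_simp, rfl⟩
      field_simp
      linear_combination h
  · rintro (⟨rfl, rfl⟩ | ⟨y, t, ⟨-, ht⟩, rfl, rfl⟩)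
    · ring
    · linear_combination y ^ 2 * ht

variable [Finite F]

theorem ncard_setOf_norm_eq_zero (a b : F) :
    {z : QuadraticAlgebra F a b | norm z = 0}.ncard =
      (Nat.card F - 1) * {t : F | t ^ 2 = a + b * t}.ncard + 1 := by
  have hinj : Set.InjOn (fun p : F × F ↦ (⟨-(p.1 * p.2), p.1⟩ : QuadraticAlgebra F a b))
      ({0}ᶜ ×ˢ {t | t ^ 2 = a + b * t}) := by
    rintro ⟨y, t⟩ ⟨hy, -⟩ ⟨y', t'⟩ - h
    obtain ⟨ht, rfl⟩ := QuadraticAlgebra.ext_iff.mp h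
    exact Prod.ext rfl (mul_left_cancel₀ hy (neg_injective ht))
  rw [setOf_norm_eq_zero, Set.ncard_insert_of_notMem, hinj.ncard_image, Set.ncard_prod,
    Set.ncard_compl, Set.ncard_singleton]
  rintro ⟨⟨y, t⟩, ⟨hy, -⟩, h⟩
  exact hy (congrArg im h)

theorem natCard_units_quadraticAlgebra (a b : F) :
    (Nat.card (QuadraticAlgebra F a b)ˣ : ℤ) =
      (Nat.card F - 1) * (Nat.card F + 1 - {t : F | t ^ 2 = a + b * t}.ncard) := by
  have : Finite (QuadraticAlgebra F a b) := .of_equiv _ (equivProd a b).symm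
  have hunits : Set.range (Units.val : (QuadraticAlgebra F a b)ˣ → _) =
      {z | QuadraticAlgebra.norm z = 0}ᶜ := by
    ext z
    exact isUnit_iff_norm_isUnit.trans isUnit_iff_ne_zero
  have hcard := Set.ncard_add_ncard_compl {z : QuadraticAlgebra F a b | norm z = 0}
  rw [← hunits, Set.ncard_range_of_injective Units.val_injective, ncard_setOf_norm_eq_zero,
    natCard_quadraticAlgebra] at hcard
  zify [Nat.card_pos (α := F)] at hcard
  linear_combination hcard

theorem unitFraction_quadraticAlgebra (a b : F) :
    unitFraction (QuadraticAlgebra F a b) =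
      (1 - (({t : F | t ^ 2 = a + b * t}.ncard : ℚ) - 1) / Nat.card F) *
        (1 - 1 / Nat.card F) := by
  have hcard : (Nat.card (QuadraticAlgebra F a b)ˣ : ℚ) =
      (Nat.card F - 1) * (Nat.card F + 1 - {t : F | t ^ 2 = a + b * t}.ncard) :=
    mod_cast natCard_units_quadraticAlgebra a b
  have hq : (Nat.card F : ℚ) ≠ 0 := Nat.cast_ne_zero.mpr Nat.card_pos.ne'
  rw [unitFraction, natCard_quadraticAlgebra, hcard, Nat.cast_pow]
  generalize {t : F | t ^ 2 = a + b * t}.ncard = r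
  field_simp
  ring

end FiniteField

section KroneckerSymbol

theorem ncard_roots_eq_quadraticChar_add_one {F : Type*} [Field F] [Fintype F] [DecidableEq F]
    (hF : ringChar F ≠ 2) (a b : F) :
    ({t : F | t ^ 2 = a + b * t}.ncard : ℤ) = quadraticChar F (b ^ 2 + 4 * a) + 1 := by
  have h₂ : (2 : F) ≠ 0 := Ring.two_ne_zero hF
  rw [← quadraticChar_card_sqrts hF, ← Set.ncard_eq_toFinset_card']
  refine congrArg Nat.cast (Set.ncard_congr (fun t _ ↦ 2 * t - b) ?_ ?_ ?_)
  · intro t (ht : t ^ 2 = a + b * t)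
    change (2 * t - b) ^ 2 = b ^ 2 + 4 * a
    linear_combination 4 * ht
  · intro s t _ _ h
    exact mul_left_cancel₀ h₂ (sub_left_injective h)
  · intro s (hs : s ^ 2 = b ^ 2 + 4 * a)
    refine ⟨(s + b) / 2, ?_, by field_simp; ring⟩
    change ((s + b) / 2) ^ 2 = a + b * ((s + b) / 2)
    field_simp
    linear_combination hs

theorem kroneckerSym_two_sq_add_four_mul (a b : ℤ) :
    kroneckerSym (b ^ 2 + 4 * a) 2 = if Even b then 0 else if Even a then 1 else -1 := by
  rw [kroneckerSym, if_pos rfl]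
  rcases Int.even_or_odd' b with ⟨k, rfl | rfl⟩
  · have hD : ((2 * k) ^ 2 + 4 * a) % 2 = 0 := by ring_nf; omega
    rw [if_pos hD, if_pos (even_two_mul k)]
  · obtain ⟨j, hj⟩ := Int.even_mul_succ_self k
    have hD : (2 * k + 1) ^ 2 + 4 * a = 8 * j + 1 + 4 * a := by linear_combination 4 * hj
    rw [hD, if_neg (by omega), if_neg (Int.not_even_two_mul_add_one k)]
    refine if_congr ?_ rfl rfl
    rw [Int.even_iff]
    omega

theorem ncard_roots_zmod_two (a b : ZMod 2) :
    {t : ZMod 2 | t ^ 2 = a + b * t}.ncard = if b = 0 then 1 else if a = 0 then 2 else 0 := by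
  rw [Set.ncard_eq_toFinset_card']
  revert a b
  decide

theorem ncard_roots_zmod_eq_kroneckerSym_add_one (a b : ℤ) (p : ℕ) [Fact p.Prime] :
    ({t : ZMod p | t ^ 2 = a + b * t}.ncard : ℤ) = kroneckerSym (b ^ 2 + 4 * a) p + 1 := by
  rcases eq_or_ne p 2 with rfl | hp
  · simp only [ncard_roots_zmod_two, kroneckerSym_two_sq_add_four_mul,
      ZMod.intCast_eq_zero_iff_even]
    split_ifs <;> rfl
  · rw [ncard_roots_eq_quadraticChar_add_one ((ZMod.ringChar_zmod_n p).substr hp), kroneckerSym,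
      if_neg hp, ← jacobiSym.legendreSym.to_jacobiSym, legendreSym]
    push_cast
    rfl

end KroneckerSymbol

section Reduction

open QuadraticAlgebra

variable {R S : Type*} [CommRing R] [CommRing S] (f : R →+* S) {a b : R} {a' b' : S}

/-- The homomorphism `R[ω] → S[ω]` induced by `f : R → S` on coefficients. -/
def quadraticAlgebraMap (ha : f a = a') (hb : f b = b') :
    QuadraticAlgebra R a b →+* QuadraticAlgebra S a' b' where
  toFun z := ⟨f z.re, f z.im⟩
  map_one' := by ext <;> simp
  map_zero' := by ext <;> simp
  map_add' x y := by ext <;> simp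
  map_mul' x y := by ext <;> simp [ha, hb]

theorem quadraticAlgebraMap_surjective (ha : f a = a') (hb : f b = b')
    (hf : Function.Surjective f) : Function.Surjective (quadraticAlgebraMap f ha hb) := by
  rintro ⟨x, y⟩
  obtain ⟨x, rfl⟩ := hf x
  obtain ⟨y, rfl⟩ := hf y
  exact ⟨⟨x, y⟩, rfl⟩

theorem ker_quadraticAlgebraMap (ha : f a = a') (hb : f b = b') {r : R}
    (hf : RingHom.ker f = Ideal.span {r}) :
    RingHom.ker (quadraticAlgebraMap f ha hb) = Ideal.span {algebraMap R _ r} := by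
  ext z
  rw [Ideal.mem_span_singleton, algebraMap_dvd_iff, ← Ideal.mem_span_singleton,
    ← Ideal.mem_span_singleton, ← hf]
  exact QuadraticAlgebra.ext_iff

/-- Reduction modulo `n` identifies `ℤ[ω] / n` with `(ℤ / n)[ω]`. -/
noncomputable def quotientQuadraticAlgebraEquivZMod (a b : ℤ) (n : ℕ) :
    QuadraticAlgebra ℤ a b ⧸ Ideal.span {(n : QuadraticAlgebra ℤ a b)} ≃+*
      QuadraticAlgebra (ZMod n) a b :=
  let f := quadraticAlgebraMap (Int.castRingHom (ZMod n)) (a := a) (b := b) rfl rfl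
  (Ideal.quotEquivOfEq (by
    rw [ker_quadraticAlgebraMap _ _ _ (ZMod.ker_intCastRingHom n), map_natCast])).trans
    (RingHom.quotientKerEquivOfSurjective (f := f)
      (quadraticAlgebraMap_surjective _ _ _ ZMod.intCast_surjective))

end Reduction

section MonogenicOrder

open QuadraticAlgebra

theorem eq_zero_of_norm_eq_zero_of_not_isSquare {R : Type*} [CommRing R] [IsDomain R]
    [IsIntegrallyClosed R] {a b : R} (h : ¬ IsSquare (b ^ 2 + 4 * a))
    {z : QuadraticAlgebra R a b} (hz : norm z = 0) : z = 0 := by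
  rw [norm_def] at hz
  have hsq : (2 * z.re + b * z.im) ^ 2 = z.im ^ 2 * (b ^ 2 + 4 * a) := by
    linear_combination 4 * hz
  have him : z.im = 0 := by
    by_contra him
    obtain ⟨k, hk⟩ := (IsIntegrallyClosed.pow_dvd_pow_iff two_ne_zero).mp (Dvd.intro _ hsq.symm)
    refine h ⟨k, mul_left_cancel₀ (pow_ne_zero 2 him) ?_⟩
    rw [← hsq, hk]
    ring
  have hre : z.re = 0 := by simpa [him] using hz
  exact QuadraticAlgebra.ext hre him

theorem algHom_injective_of_norm_eq_zero {R A : Type*} [CommRing R] [Ring A] [Algebra R A]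
    [FaithfulSMul R A] {a b : R} (h : ∀ z : QuadraticAlgebra R a b, norm z = 0 → z = 0)
    (f : QuadraticAlgebra R a b →ₐ[R] A) : Function.Injective f := by
  refine (injective_iff_map_eq_zero f).mpr fun z hz ↦ h z ?_
  apply FaithfulSMul.algebraMap_injective R A
  rw [← f.commutes, algebraMap_norm_eq_mul_star, map_mul, hz, zero_mul, map_zero]

theorem range_eq_closure_singleton {R : Type*} [Ring R] {a b : ℤ}
    (f : QuadraticAlgebra ℤ a b →+* R) : f.range = Subring.closure {f ω} := by
  apply le_antisymm
  · rintro _ ⟨z, rfl⟩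
    rw [← mk_eta z, mk_eq_add_smul_omega, map_add, map_zsmul, eq_intCast, map_intCast]
    exact add_mem (intCast_mem _ _) (zsmul_mem (Subring.mem_closure_of_mem (Set.mem_singleton _)) _)
  · exact Subring.closure_le.mpr (Set.singleton_subset_iff.mpr ⟨ω, rfl⟩)

variable {R : Type*} [CommRing R] [CharZero R] {a b : ℤ} {τ : R}

/-- If `τ ^ 2 = a + b * τ` and `b ^ 2 + 4 * a` is not a square, then `ℤ[τ]` is the quadratic
algebra `ℤ[ω]` with `ω ^ 2 = a + b * ω`. -/
noncomputable def quadraticAlgebraEquivClosure (h : ¬ IsSquare (b ^ 2 + 4 * a))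
    (hτ : τ ^ 2 = a + b * τ) :
    QuadraticAlgebra ℤ a b ≃+* (Subring.closure {τ} : Subring R) :=
  let f : QuadraticAlgebra ℤ a b →ₐ[ℤ] R := lift ⟨τ, by simpa [sq] using hτ⟩
  have hf : Function.Injective f :=
    algHom_injective_of_norm_eq_zero (fun _ ↦ eq_zero_of_norm_eq_zero_of_not_isSquare h) f
  have hω : f ω = τ := by simp [f]
  (RingEquiv.ofBijective (f : QuadraticAlgebra ℤ a b →+* R).rangeRestrict
    ⟨fun _ _ hxy ↦ hf (congrArg Subtype.val hxy), RingHom.rangeRestrict_surjective _⟩).trans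
    (RingEquiv.subringCongr ((range_eq_closure_singleton _).trans (by rw [RingHom.coe_coe, hω])))

/-- Reduction modulo `n` of the order `ℤ[τ]` with `τ ^ 2 = a + b * τ`. -/
noncomputable def quotientClosureEquivZMod (h : ¬ IsSquare (b ^ 2 + 4 * a))
    (hτ : τ ^ 2 = a + b * τ) (n : ℕ) :
    (Subring.closure {τ} : Subring R) ⧸ Ideal.span {(n : (Subring.closure {τ} : Subring R))} ≃+*
      QuadraticAlgebra (ZMod n) a b :=
  (Ideal.quotientEquiv _ _ (quadraticAlgebraEquivClosure h hτ) (by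
    rw [Ideal.map_span, Set.image_singleton, RingHom.coe_coe, map_natCast])).symm.trans
    (quotientQuadraticAlgebraEquivZMod a b n)

end MonogenicOrder

theorem unitFraction_quadraticAlgebra_zmod (a b : ℤ) (p : ℕ) [Fact p.Prime] :
    unitFraction (QuadraticAlgebra (ZMod p) a b) =
      (1 - (kroneckerSym (b ^ 2 + 4 * a) p : ℚ) / p) * (1 - 1 / p) := by
  have hroots : ({t : ZMod p | t ^ 2 = a + b * t}.ncard : ℚ) =
      kroneckerSym (b ^ 2 + 4 * a) p + 1 :=
    mod_cast ncard_roots_zmod_eq_kroneckerSym_add_one a b p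
  rw [unitFraction_quadraticAlgebra, hroots, Nat.card_zmod, add_sub_cancel_right]

theorem sq_add_four_mul_neg_ediv_four {Δ : ℤ} (hΔ : Δ % 4 = 0 ∨ Δ % 4 = 1) :
    Δ ^ 2 + 4 * -((Δ ^ 2 - Δ) / 4) = Δ := by
  have hdvd : 4 ∣ Δ * (Δ - 1) := by
    rcases hΔ with h | h
    · exact (Int.dvd_of_emod_eq_zero h).mul_right _
    · exact (show 4 ∣ Δ - 1 by omega).mul_left _
  rw [show Δ ^ 2 - Δ = Δ * (Δ - 1) by ring, mul_neg, Int.mul_ediv_cancel' hdvd]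
  ring

theorem card_units_quotient_order_general {R : Type*} [CommRing R] [CharZero R] {Δ a b : ℤ}
    (hΔ : b ^ 2 + 4 * a = Δ) (hsq : ¬ IsSquare Δ) {τ : R} (hτ : τ ^ 2 = a + b * τ)
    {N : ℕ} (hN : 0 < N) :
    (Nat.card ((Subring.closure {τ} : Subring R) ⧸
        (Ideal.span {(N : (Subring.closure {τ} : Subring R))}))ˣ : ℚ) =
      (N : ℚ) ^ 2 * ∏ ℓ ∈ N.primeFactors,
        ((1 - (kroneckerSym Δ ℓ : ℚ) / (ℓ : ℚ)) * (1 - 1 / (ℓ : ℚ))) := by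
  subst hΔ
  have : NeZero N := ⟨hN.ne'⟩
  let e := quotientClosureEquivZMod hsq hτ
  have : Finite (QuadraticAlgebra (ZMod N) (a : ZMod N) b) :=
    .of_equiv _ (QuadraticAlgebra.equivProd _ _).symm
  have := Finite.of_equiv _ (e N).symm.toEquiv
  rw [card_units_eq_card_mul_unitFraction, unitFraction_quotient_span_natCast hN.ne',
    Nat.card_congr (e N).toEquiv, natCard_quadraticAlgebra, Nat.card_zmod, Nat.cast_pow]
  congr 1
  refine Finset.prod_congr rfl fun ℓ hℓ ↦ ?_
  have : Fact ℓ.Prime := ⟨Nat.prime_of_mem_primeFactors hℓ⟩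
  rw [unitFraction_congr (e ℓ).toMulEquiv, unitFraction_quadraticAlgebra_zmod]

/-- Let `𝒪 = ℤ[τ]` be the order of discriminant `Δ` in an imaginary quadratic
field `K` (so `τ = (Δ + √Δ)/2` satisfies `τ² − Δτ + (Δ² − Δ)/4 = 0`) and `N` a positive integer.
Then `#(𝒪/N𝒪)ˣ = N² · ∏_{ℓ ∣ N} (1 − (Δ/ℓ)/ℓ)(1 − 1/ℓ)`, the product over primes `ℓ ∣ N`. -/
theorem card_units_quotient_order
    (K : Type*) [Field K] [Algebra ℚ K]
    (hdim : Module.finrank ℚ K = 2) (himag : IsEmpty (K →+* ℝ))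
    (Δ : ℤ) (hΔneg : Δ < 0) (hΔmod : Δ % 4 = 0 ∨ Δ % 4 = 1)
    (τ : K) (hτ : τ ^ 2 - (Δ : K) * τ + (((Δ ^ 2 - Δ) / 4 : ℤ) : K) = 0)
    (N : ℕ) (hN : 0 < N) :
    (Nat.card ((Subring.closure {τ} : Subring K) ⧸
        (Ideal.span {(N : (Subring.closure {τ} : Subring K))}))ˣ : ℚ) =
      (N : ℚ) ^ 2 * ∏ ℓ ∈ N.primeFactors,
        ((1 - (kroneckerSym Δ ℓ : ℚ) / (ℓ : ℚ)) * (1 - 1 / (ℓ : ℚ))) := by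
  have : CharZero K := algebraRat.charZero K
  exact card_units_quotient_order_general (sq_add_four_mul_neg_ediv_four hΔmod)
    (fun h ↦ hΔneg.not_ge h.nonneg) (by push_cast at hτ ⊢; linear_combination hτ) hN
end

section
/- Let 𝒪 be an order of discriminant Δ in an imaginary quadratic field, let ℓ be an odd prime, and let a be a positive integer. Then there exists a primitive, proper, real ideal I of 𝒪 with index ℓ^a if and only if a = ord_ℓ(Δ), the ℓ-adic valuation of Δ. -/
variable {K : Type*} [Field K]

/-- An ideal `I` of an order `O` in a quadratic field is *primitive*
if the additive quotient group `O/I` is cyclic. -/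
def IsPrimitiveIdeal (O : Subring K) (I : Ideal O) : Prop :=
  IsAddCyclic (O ⧸ I)

/-- An ideal `I` of an order `O ⊆ K` is *proper* if its multiplier ring
`{x ∈ K : xI ⊆ I}` equals `O`. -/
def IsProperIdeal (O : Subring K) (I : Ideal O) : Prop :=
  ∀ x : K, (∀ y : O, y ∈ I → ∃ z : O, z ∈ I ∧ (z : K) = x * (y : K)) ↔ x ∈ O

/-- An ideal `I` of an order `O ⊆ K` is *real* (with respect to the nontrivial automorphism
`σ` of `K`, i.e. complex conjugation) if it is stable under `σ`. -/
def IsRealIdeal (σ : K →+* K) (O : Subring K) (I : Ideal O) : Prop :=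
  ∀ y : O, y ∈ I → ∃ z : O, z ∈ I ∧ (z : K) = σ (y : K)

/-!
A primitive ideal of index `n` in a quadratic order is `(n, τ)` for a suitable generator `τ` of
the order, whose norm is then a multiple `n * c` of `n`. If `τ` has trace `T`, this ideal is
proper iff `gcd(n, T, c) = 1`, and real iff `n ∣ T`. The discriminant of the order is
`T ^ 2 - 4 * n * c`, so for odd `n` both conditions hold together for some `τ` iff `n` divides the
discriminant and is coprime to the cofactor. For `n = ℓ ^ a` this pins `a` down as the exact
exponent of `ℓ` in the discriminant.
-/

section CyclicRings

variable {R : Type*} [Ring R]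

theorem isAddCyclic_iff_intCast_surjective :
    IsAddCyclic R ↔ Function.Surjective (Int.cast : ℤ → R) := by
  refine ⟨fun ⟨g, hg⟩ ↦ ?_, fun h ↦ isAddCyclic_of_surjective (Int.castAddHom R) h⟩
  obtain ⟨k, hk : k • g = 1⟩ := hg 1
  obtain ⟨c, hc : c • g = g * g⟩ := hg (g * g)
  have hcg : (c : R) = g := by
    rw [← zsmul_one, ← hk, smul_comm, hc, ← smul_mul_assoc, hk, one_mul]
  intro x
  obtain ⟨m, rfl : m • g = x⟩ := hg x
  exact ⟨m * c, by rw [Int.cast_mul, hcg, zsmul_eq_mul]⟩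

theorem charP_natCard_of_intCast_surjective
    (h : Function.Surjective (Int.cast : ℤ → R)) : CharP R (Nat.card R) := by
  have hgen (x : R) : x ∈ AddSubgroup.zmultiples (1 : R) := by
    obtain ⟨k, rfl⟩ := h x
    exact ⟨k, zsmul_one k⟩
  rw [← addOrderOf_eq_card_of_forall_mem_zmultiples hgen]
  exact CharP.addOrderOf_one R

end CyclicRings

theorem intCast_mem_iff_dvd_of_charP_quotient {R : Type*} [CommRing R] {I : Ideal R} (n : ℕ)
    [CharP (R ⧸ I) n] (k : ℤ) : (k : R) ∈ I ↔ (n : ℤ) ∣ k := by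
  rw [← CharP.intCast_eq_zero_iff (R ⧸ I) n, ← Ideal.Quotient.eq_zero_iff_mem, map_intCast]

section Arithmetic

theorem exists_root_iff_of_odd {n : ℤ} (hn : Odd n) (T N : ℤ) :
    (∃ t c : ℤ, t ^ 2 - T * t + N = n * c ∧ n ∣ T - 2 * t ∧ IsCoprime n c) ↔
      ∃ d : ℤ, T ^ 2 - 4 * N = n * d ∧ IsCoprime n d := by
  have hfour : IsCoprime n 4 := (Int.isCoprime_two_right.2 hn).pow_right (n := 2)
  constructor
  · rintro ⟨t, c, hc, ⟨k, hk⟩, hcop⟩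
    refine ⟨-(4 * c) + n * k ^ 2, by linear_combination (T - 2 * t + n * k) * hk - 4 * hc, ?_⟩
    exact (hfour.mul_right hcop).neg_right.add_mul_left_right _
  · rintro ⟨d, hd, hcop⟩
    obtain ⟨m, rfl⟩ := hn
    -- `m + 1` is the inverse of `2` modulo `2 * m + 1`.
    set n := 2 * m + 1 with hn
    have hdisc : 4 * ((T * (m + 1)) ^ 2 - T * (T * (m + 1)) + N) = n * (n * T ^ 2 - d) := by
      linear_combination -hd
    obtain ⟨c, hc⟩ := hfour.dvd_of_dvd_mul_left (Dvd.intro _ hdisc.symm)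
    have hfc : 4 * c = -d + n * T ^ 2 := by
      apply mul_left_cancel₀ (by lia : n ≠ 0)
      linear_combination hdisc - 4 * hc
    refine ⟨T * (m + 1), c, hc, ⟨-T, by linear_combination T * hn⟩, ?_⟩
    exact (hfc ▸ hcop.neg_right.add_mul_left_right _).of_mul_right_right

theorem exists_eq_pow_mul_isCoprime_iff {p : ℕ} (hp : p.Prime) {a : ℕ} (ha : 0 < a) (D : ℤ) :
    (∃ d : ℤ, D = (p ^ a : ℕ) * d ∧ IsCoprime ((p ^ a : ℕ) : ℤ) d) ↔ a = padicValInt p D := by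
  have : Fact p.Prime := ⟨hp⟩
  have hcop (d : ℤ) : IsCoprime ((p : ℤ) ^ a) d ↔ ¬ (p : ℤ) ∣ d := by
    rw [IsCoprime.pow_left_iff ha,
      (Nat.prime_iff_prime_int.1 hp).irreducible.coprime_iff_not_dvd]
  simp only [Nat.cast_pow, hcop]
  constructor
  · rintro ⟨d, rfl, hd⟩
    have hd0 : d ≠ 0 := by rintro rfl; exact hd (dvd_zero _)
    have hp0 : (p : ℤ) ^ a ≠ 0 := pow_ne_zero _ (Nat.cast_ne_zero.2 hp.ne_zero)
    rw [padicValInt.mul hp0 hd0, padicValInt.eq_zero_of_not_dvd hd, add_zero, ← Nat.cast_pow,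
      padicValInt.of_nat, padicValNat.prime_pow]
  · rintro rfl
    obtain ⟨d, hd⟩ := padicValInt_dvd (p := p) D
    refine ⟨d, hd, fun hpd ↦ ?_⟩
    have hdvd : (p : ℤ) ^ (padicValInt p D + 1) ∣ D := by
      rw [pow_succ]
      exact (mul_dvd_mul_left _ hpd).trans hd.symm.dvd
    rcases (padicValInt_dvd_iff _ _).1 hdvd with rfl | hle
    · simp at ha
    · lia

theorem sq_sub_four_mul_ediv_four {D : ℤ} (hD : D % 4 = 0 ∨ D % 4 = 1) :
    D ^ 2 - 4 * ((D ^ 2 - D) / 4) = D := by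
  have hdvd : 4 ∣ D ^ 2 - D := by
    rw [sq, ← mul_sub_one]
    rcases hD with h | h
    · exact (Int.dvd_of_emod_eq_zero h).mul_right _
    · exact (by lia : (4 : ℤ) ∣ D - 1).mul_left _
  rw [Int.mul_ediv_cancel' hdvd, sub_sub_cancel]

end Arithmetic

section Conjugation

theorem mem_bot_of_algHom_apply_eq {F A B : Type*} [Field F] [Ring A] [Algebra F A]
    [Ring B] [Algebra F B] (hA : Module.finrank F A = 2) {f g : A →ₐ[F] B} (hfg : f ≠ g) {x : A}
    (hx : f x = g x) : x ∈ (⊥ : Subalgebra F A) := by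
  have := Subalgebra.isSimpleOrder_of_finrank hA
  rcases eq_bot_or_eq_top (AlgHom.equalizer f g) with h | h
  · exact h ▸ hx
  · exact absurd (AlgHom.equalizer_eq_top.1 h) hfg

theorem map_ne_self_of_not_isSquare_discr [Algebra ℚ K] (hK : Module.finrank ℚ K = 2)
    {σ : K →+* K} (hσ : σ ≠ RingHom.id K) {τ : K} {T N : ℤ}
    (hτ : τ ^ 2 - T * τ + N = 0) (hD : ¬ IsSquare (T ^ 2 - 4 * N)) : σ τ ≠ τ := by
  intro hστ
  have hne : σ.toRatAlgHom ≠ AlgHom.id ℚ K := fun h ↦ hσ (congrArg AlgHom.toRingHom h)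
  obtain ⟨r, rfl⟩ := Algebra.mem_bot.1 (mem_bot_of_algHom_apply_eq hK hne hστ)
  have hr : r ^ 2 - T * r + N = 0 := by
    apply (algebraMap ℚ K).injective
    simpa [map_add, map_sub, map_mul, map_pow] using hτ
  refine hD (Rat.isSquare_intCast_iff.1 ⟨2 * r - T, ?_⟩)
  push_cast
  linear_combination -4 * hr

end Conjugation

/-- `IsQuadraticGenerator σ O τ T N` says that `O = ℤ + ℤτ` is the quadratic order generated by an
element `τ` of trace `T` and norm `N` with respect to the conjugation `σ`. Asking that `σ` move `τ`
expresses that `τ` is irrational, without reference to the ambient field. -/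
structure IsQuadraticGenerator (σ : K →+* K) (O : Subring K) (τ : K) (T N : ℤ) : Prop where
  mem_iff (z : K) : z ∈ O ↔ ∃ x y : ℤ, z = x + y * τ
  add_conj : τ + σ τ = T
  mul_conj : τ * σ τ = N
  conj_ne : σ τ ≠ τ

namespace IsQuadraticGenerator

variable {σ : K →+* K} {O : Subring K} {τ : K} {T N : ℤ}

theorem of_sq_sub_mul_add_eq_zero (hτ : τ ^ 2 - T * τ + N = 0) (hστ : σ τ ≠ τ) :
    IsQuadraticGenerator σ (Subring.closure {τ}) τ T N := by
  have hconj : σ τ ^ 2 - T * σ τ + N = 0 := by simpa using congrArg σ hτ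
  have hadd : τ + σ τ = T := by
    apply mul_left_cancel₀ (sub_ne_zero.2 hστ)
    linear_combination hconj - hτ
  refine ⟨fun z ↦ ⟨fun hz ↦ ?_, ?_⟩, hadd, by linear_combination τ * hadd - hτ, hστ⟩
  · induction hz using Subring.closure_induction with
    | mem z hz => exact ⟨0, 1, by simpa using hz⟩
    | zero => exact ⟨0, 0, by simp⟩
    | one => exact ⟨1, 0, by simp⟩
    | add _ _ _ _ hz hw =>
      obtain ⟨⟨x, y, rfl⟩, x', y', rfl⟩ := And.intro hz hw
      exact ⟨x + x', y + y', by push_cast; ring⟩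
    | neg _ _ hz =>
      obtain ⟨x, y, rfl⟩ := hz
      exact ⟨-x, -y, by push_cast; ring⟩
    | mul _ _ _ _ hz hw =>
      obtain ⟨⟨x, y, rfl⟩, x', y', rfl⟩ := And.intro hz hw
      exact ⟨x * x' - y * y' * N, x * y' + y * x' + y * y' * T, by
        push_cast; linear_combination (y : K) * y' * hτ⟩
  · rintro ⟨x, y, rfl⟩
    exact add_mem (intCast_mem _ _) (mul_mem (intCast_mem _ _) (Subring.mem_closure_of_mem rfl))

theorem sub_intCast (h : IsQuadraticGenerator σ O τ T N) (t : ℤ) {N' : ℤ}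
    (hN' : t ^ 2 - T * t + N = N') : IsQuadraticGenerator σ O (τ - t) (T - 2 * t) N' where
  mem_iff z := by
    rw [h.mem_iff]
    constructor <;> rintro ⟨x, y, rfl⟩
    · exact ⟨x + y * t, y, by push_cast; ring⟩
    · exact ⟨x - y * t, y, by push_cast; ring⟩
  add_conj := by
    rw [map_sub, map_intCast]
    push_cast
    linear_combination h.add_conj
  mul_conj := by
    rw [map_sub, map_intCast, ← hN']
    push_cast
    linear_combination h.mul_conj - t * h.add_conj
  conj_ne := by simpa using h.conj_ne

/-- The generator `τ`, as an element of the order `O`. -/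
def gen (h : IsQuadraticGenerator σ O τ T N) : O :=
  ⟨τ, (h.mem_iff τ).2 ⟨0, 1, by simp⟩⟩

theorem exists_eq_add_mul_gen (h : IsQuadraticGenerator σ O τ T N) (z : O) :
    ∃ x y : ℤ, z = x + y * h.gen := by
  obtain ⟨x, y, hz⟩ := (h.mem_iff z).1 z.2
  exact ⟨x, y, Subtype.ext (by simpa [gen] using hz)⟩

theorem gen_mul_gen (h : IsQuadraticGenerator σ O τ T N) :
    h.gen * h.gen = T * h.gen - N := by
  ext
  push_cast [gen]
  linear_combination τ * h.add_conj - h.mul_conj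

theorem conj_eq (h : IsQuadraticGenerator σ O τ T N) : σ τ = T - τ :=
  eq_sub_of_add_eq' h.add_conj

theorem norm_ne_zero (h : IsQuadraticGenerator σ O τ T N) : N ≠ 0 := by
  rintro rfl
  rcases mul_eq_zero.1 (h.mul_conj.trans Int.cast_zero) with hτ | hτ
  · exact h.conj_ne (by rw [hτ, map_zero])
  · exact h.conj_ne (by rw [hτ, (map_eq_zero σ).1 hτ])

/-- The ideal `(n, τ)`. When `n ∣ N` it is the lattice `ℤn + ℤτ`; otherwise it is larger. -/
def ideal (h : IsQuadraticGenerator σ O τ T N) (n : ℕ) : Ideal O :=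
  Ideal.span {(n : O), h.gen}

theorem natCast_mem_ideal (h : IsQuadraticGenerator σ O τ T N) (n : ℕ) : (n : O) ∈ h.ideal n :=
  Ideal.subset_span (Set.mem_insert _ _)

theorem gen_mem_ideal (h : IsQuadraticGenerator σ O τ T N) (n : ℕ) : h.gen ∈ h.ideal n :=
  Ideal.subset_span (Set.mem_insert_of_mem _ rfl)

theorem intCast_surjective_quotient (h : IsQuadraticGenerator σ O τ T N) {I : Ideal O}
    (hI : h.gen ∈ I) : Function.Surjective (Int.cast : ℤ → O ⧸ I) := by
  intro z
  obtain ⟨z, rfl⟩ := Ideal.Quotient.mk_surjective z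
  obtain ⟨x, y, rfl⟩ := h.exists_eq_add_mul_gen z
  exact ⟨x, by simp [Ideal.Quotient.eq_zero_iff_mem.2 hI]⟩

theorem dvd_norm_of_gen_mem (h : IsQuadraticGenerator σ O τ T N) {I : Ideal O} (hI : h.gen ∈ I)
    (n : ℕ) [CharP (O ⧸ I) n] : (n : ℤ) ∣ N := by
  have hN : (N : O) = (T - h.gen) * h.gen := by linear_combination h.gen_mul_gen
  rw [← intCast_mem_iff_dvd_of_charP_quotient (I := I), hN]
  exact I.mul_mem_left _ hI

theorem eq_ideal_of_gen_mem (h : IsQuadraticGenerator σ O τ T N) {I : Ideal O} (hI : h.gen ∈ I)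
    (n : ℕ) [CharP (O ⧸ I) n] : I = h.ideal n := by
  apply le_antisymm
  · intro z hz
    obtain ⟨x, y, rfl⟩ := h.exists_eq_add_mul_gen z
    obtain ⟨u, rfl⟩ := (intCast_mem_iff_dvd_of_charP_quotient n x).1
      ((I.add_mem_iff_left (I.mul_mem_left _ hI)).1 hz)
    push_cast
    exact add_mem (Ideal.mul_mem_right _ _ (h.natCast_mem_ideal n))
      (Ideal.mul_mem_left _ _ (h.gen_mem_ideal n))
  · refine Ideal.span_le.2 (Set.insert_subset ?_ (Set.singleton_subset_iff.2 hI))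
    exact_mod_cast (intCast_mem_iff_dvd_of_charP_quotient (I := I) n n).2 dvd_rfl

theorem exists_eq_ideal_of_isPrimitiveIdeal (h : IsQuadraticGenerator σ O τ T N) {I : Ideal O}
    (hI : IsPrimitiveIdeal O I) :
    ∃ (t c : ℤ) (hc : t ^ 2 - T * t + N = Nat.card (O ⧸ I) * c),
      I = (h.sub_intCast t hc).ideal (Nat.card (O ⧸ I)) := by
  have hsurj := isAddCyclic_iff_intCast_surjective.1 hI
  have := charP_natCard_of_intCast_surjective hsurj
  obtain ⟨t, ht⟩ := hsurj (Ideal.Quotient.mk I h.gen)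
  have hmem : (h.sub_intCast t rfl).gen ∈ I := by
    have : (h.sub_intCast t rfl).gen = h.gen - t := by ext; simp [gen]
    rw [this, ← Ideal.Quotient.eq_zero_iff_mem, map_sub, map_intCast, ht, sub_self]
  obtain ⟨c, hc⟩ := (h.sub_intCast t rfl).dvd_norm_of_gen_mem hmem (Nat.card (O ⧸ I))
  exact ⟨t, c, hc, (h.sub_intCast t hc).eq_ideal_of_gen_mem hmem _⟩

theorem isPrimitiveIdeal_ideal (h : IsQuadraticGenerator σ O τ T N) (n : ℕ) :
    IsPrimitiveIdeal O (h.ideal n) :=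
  isAddCyclic_iff_intCast_surjective.2 (h.intCast_surjective_quotient (h.gen_mem_ideal n))

section CharZero

variable [CharZero K]

theorem eq_and_eq_of_add_mul_gen_eq (h : IsQuadraticGenerator σ O τ T N) {x y x' y' : ℤ}
    (hxy : (x + y * h.gen : O) = x' + y' * h.gen) : x = x' ∧ y = y' := by
  have hK : (x + y * τ : K) = x' + y' * τ := by simpa [gen] using congrArg Subtype.val hxy
  have hσK : (x + y * σ τ : K) = x' + y' * σ τ := by simpa using congrArg σ hK
  have hy : (y : K) = y' := by
    apply mul_right_cancel₀ (sub_ne_zero.2 h.conj_ne)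
    linear_combination hσK - hK
  have hx : (x : K) = x' := by linear_combination hK - τ * hy
  exact ⟨mod_cast hx, mod_cast hy⟩

variable {n : ℕ} {c : ℤ}

theorem add_mul_gen_mem_ideal_iff (h : IsQuadraticGenerator σ O τ T (n * c)) {x y : ℤ} :
    (x + y * h.gen : O) ∈ h.ideal n ↔ (n : ℤ) ∣ x := by
  rw [Ideal.add_mem_iff_left _ (Ideal.mul_mem_left _ _ (h.gen_mem_ideal n))]
  constructor
  · intro hx
    obtain ⟨a, b, hab⟩ := Ideal.mem_span_pair.1 hx
    obtain ⟨p, q, rfl⟩ := h.exists_eq_add_mul_gen a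
    obtain ⟨r, s, rfl⟩ := h.exists_eq_add_mul_gen b
    refine ⟨p - s * c, (h.eq_and_eq_of_add_mul_gen_eq (y := 0) (y' := q * n + r + s * T) ?_).1⟩
    have hsq := h.gen_mul_gen
    push_cast at hsq ⊢
    linear_combination s * hsq - hab
  · rintro ⟨u, rfl⟩
    push_cast
    exact Ideal.mul_mem_right _ _ (h.natCast_mem_ideal n)

theorem natCard_quotient_ideal (h : IsQuadraticGenerator σ O τ T (n * c)) :
    Nat.card (O ⧸ h.ideal n) = n := by
  have := charP_natCard_of_intCast_surjective
    (h.intCast_surjective_quotient (h.gen_mem_ideal n))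
  have hdvd (k : ℤ) : (Nat.card (O ⧸ h.ideal n) : ℤ) ∣ k ↔ (n : ℤ) ∣ k := by
    rw [← intCast_mem_iff_dvd_of_charP_quotient (I := h.ideal n),
      ← h.add_mul_gen_mem_ideal_iff (y := 0)]
    simp
  exact Nat.dvd_antisymm (mod_cast (hdvd n).2 dvd_rfl) (mod_cast (hdvd _).1 dvd_rfl)

theorem isRealIdeal_ideal_iff (h : IsQuadraticGenerator σ O τ T (n * c)) :
    IsRealIdeal σ O (h.ideal n) ↔ (n : ℤ) ∣ T := by
  have hconj (x y : ℤ) (z : O) : (z : K) = σ (x + y * h.gen : O) ↔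
      z = (x + y * T : ℤ) + (-y : ℤ) * h.gen := by
    rw [Subtype.ext_iff]
    push_cast [gen]
    rw [map_add, map_mul, map_intCast, map_intCast, h.conj_eq]
    ring_nf
  constructor
  · intro hreal
    have hgen := (h.add_mul_gen_mem_ideal_iff (x := 0) (y := 1)).2 (dvd_zero _)
    obtain ⟨z, hz, hzσ⟩ := hreal _ hgen
    rw [(hconj 0 1 z).1 hzσ, h.add_mul_gen_mem_ideal_iff] at hz
    simpa using hz
  · intro hT z hz
    obtain ⟨x, y, rfl⟩ := h.exists_eq_add_mul_gen z
    refine ⟨_, h.add_mul_gen_mem_ideal_iff.2 ?_, (hconj x y _).2 rfl⟩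
    exact dvd_add (h.add_mul_gen_mem_ideal_iff.1 hz) (hT.mul_left y)

/-- The quotient `τ / d` multiplies `(n, τ)` into itself, hence lies in `O = ℤ + ℤτ`. -/
theorem isUnit_of_isProperIdeal_ideal (h : IsQuadraticGenerator σ O τ T (n * c))
    (hI : IsProperIdeal O (h.ideal n)) {d : ℤ} (hdn : d ∣ n) (hdT : d ∣ T) (hdc : d ∣ c) :
    IsUnit d := by
  have hn : (n : ℤ) ≠ 0 := left_ne_zero_of_mul h.norm_ne_zero
  obtain ⟨n', hn'⟩ := hdn
  obtain ⟨T', rfl⟩ := hdT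
  obtain ⟨c', rfl⟩ := hdc
  have hd : (d : K) ≠ 0 := by
    rintro hd
    apply hn
    rw [hn', Int.cast_eq_zero.1 hd, zero_mul]
  have hmem : τ / d ∈ O := by
    refine (hI _).1 fun z hz ↦ ?_
    obtain ⟨x, y, rfl⟩ := h.exists_eq_add_mul_gen z
    obtain ⟨u, rfl⟩ := h.add_mul_gen_mem_ideal_iff.1 hz
    refine ⟨(n * (-(y * c')) : ℤ) + (n' * u + y * T' : ℤ) * h.gen,
      h.add_mul_gen_mem_ideal_iff.2 (dvd_mul_right _ _), ?_⟩
    have hsq := congrArg Subtype.val h.gen_mul_gen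
    have hnK : (n : K) = d * n' := mod_cast congrArg (Int.cast : ℤ → K) hn'
    push_cast [gen] at hsq ⊢
    field_simp
    linear_combination -y * hsq - u * τ * hnK
  obtain ⟨x, y, hxy⟩ := (h.mem_iff _).1 hmem
  refine IsUnit.of_mul_eq_one y
    (h.eq_and_eq_of_add_mul_gen_eq (x := d * x) (x' := 0) (y' := 1) ?_).2
  ext
  push_cast [gen]
  rw [div_eq_iff hd] at hxy
  linear_combination -hxy

theorem isProperIdeal_ideal_of_isCoprime (h : IsQuadraticGenerator σ O τ T (n * c))
    (hcop : IsCoprime (Int.gcd n T : ℤ) c) : IsProperIdeal O (h.ideal n) := by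
  have hn : (n : ℤ) ≠ 0 := left_ne_zero_of_mul h.norm_ne_zero
  refine fun m ↦ ⟨fun hm ↦ ?_, fun hm z hz ↦ ⟨⟨m, hm⟩ * z, Ideal.mul_mem_left _ _ hz, rfl⟩⟩
  obtain ⟨z, hz, hzm⟩ := hm _ (h.natCast_mem_ideal n)
  obtain ⟨w, hw, hwm⟩ := hm _ (h.gen_mem_ideal n)
  obtain ⟨x, q, rfl⟩ := h.exists_eq_add_mul_gen z
  obtain ⟨r, s, rfl⟩ := h.exists_eq_add_mul_gen w
  obtain ⟨u, rfl⟩ := h.add_mul_gen_mem_ideal_iff.1 hz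
  obtain ⟨v, rfl⟩ := h.add_mul_gen_mem_ideal_iff.1 hw
  push_cast [gen] at hzm hwm
  obtain ⟨hconst, hlin⟩ := h.eq_and_eq_of_add_mul_gen_eq
      (x := n * n * v) (y := n * s) (x' := -(q * (n * c))) (y' := n * u + q * T) <| by
    have hsq := congrArg Subtype.val h.gen_mul_gen
    ext
    push_cast [gen] at hsq ⊢
    linear_combination n * hwm - τ * hzm + q * hsq
  have hqT : (n : ℤ) ∣ q * T := ⟨s - u, by linear_combination -hlin⟩
  have hqc : (n : ℤ) ∣ q * c :=
    ⟨-v, mul_left_cancel₀ hn (by linear_combination hconst)⟩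
  obtain ⟨q', rfl⟩ : (n : ℤ) ∣ q := by
    have hqg : (n : ℤ) ∣ q * Int.gcd n T := by rwa [Int.coe_gcd, dvd_mul_gcd_iff_dvd_mul]
    obtain ⟨e, f, hef⟩ := hcop
    have hq : q = e * (q * Int.gcd n T) + f * (q * c) := by linear_combination -q * hef
    exact hq ▸ dvd_add (hqg.mul_left e) (hqc.mul_left f)
  refine (h.mem_iff m).2 ⟨u, q', mul_right_cancel₀ (b := (n : K)) (mod_cast hn) ?_⟩
  rw [← hzm]
  push_cast
  ring

/-- The coprimality condition says that the form `n x² + T x y + c y²` is primitive. -/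
theorem isProperIdeal_ideal_iff (h : IsQuadraticGenerator σ O τ T (n * c)) :
    IsProperIdeal O (h.ideal n) ↔ IsCoprime (Int.gcd n T : ℤ) c :=
  ⟨fun hI ↦ IsRelPrime.isCoprime fun _ hg hc ↦ h.isUnit_of_isProperIdeal_ideal hI
      (hg.trans (Int.gcd_dvd_left _ _)) (hg.trans (Int.gcd_dvd_right _ _)) hc,
    h.isProperIdeal_ideal_of_isCoprime⟩

theorem isProperIdeal_and_isRealIdeal_ideal_iff (h : IsQuadraticGenerator σ O τ T (n * c)) :
    IsProperIdeal O (h.ideal n) ∧ IsRealIdeal σ O (h.ideal n) ↔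
      (n : ℤ) ∣ T ∧ IsCoprime (n : ℤ) c := by
  rw [h.isProperIdeal_ideal_iff, h.isRealIdeal_ideal_iff, and_comm]
  refine and_congr_right fun hT ↦ ?_
  rw [Int.gcd_eq_left (Int.natCast_nonneg n) hT]

theorem exists_ideal_iff_exists_root (h : IsQuadraticGenerator σ O τ T N) :
    (∃ I : Ideal O, IsPrimitiveIdeal O I ∧ IsProperIdeal O I ∧ IsRealIdeal σ O I ∧
      Nat.card (O ⧸ I) = n) ↔
    ∃ t c : ℤ, t ^ 2 - T * t + N = n * c ∧ (n : ℤ) ∣ T - 2 * t ∧ IsCoprime (n : ℤ) c := by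
  constructor
  · rintro ⟨I, hprim, hproper, hreal, rfl⟩
    obtain ⟨t, c, hc, hI⟩ := h.exists_eq_ideal_of_isPrimitiveIdeal hprim
    refine ⟨t, c, hc, (h.sub_intCast t hc).isProperIdeal_and_isRealIdeal_ideal_iff.1 ?_⟩
    exact hI ▸ ⟨hproper, hreal⟩
  · rintro ⟨t, c, hc, hTc⟩
    have ht := h.sub_intCast t hc
    obtain ⟨hproper, hreal⟩ := ht.isProperIdeal_and_isRealIdeal_ideal_iff.2 hTc
    exact ⟨_, ht.isPrimitiveIdeal_ideal n, hproper, hreal, ht.natCard_quotient_ideal⟩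

theorem exists_ideal_iff_of_odd (h : IsQuadraticGenerator σ O τ T N) (hn : Odd n) :
    (∃ I : Ideal O, IsPrimitiveIdeal O I ∧ IsProperIdeal O I ∧ IsRealIdeal σ O I ∧
      Nat.card (O ⧸ I) = n) ↔
    ∃ d : ℤ, T ^ 2 - 4 * N = n * d ∧ IsCoprime (n : ℤ) d := by
  rw [h.exists_ideal_iff_exists_root, exists_root_iff_of_odd (mod_cast hn)]

end CharZero

end IsQuadraticGenerator

theorem exists_primitive_proper_real_odd_prime_power_general [CharZero K] {σ : K →+* K} {τ : K}
    {T N : ℤ} (hτ : τ ^ 2 - T * τ + N = 0) (hστ : σ τ ≠ τ)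
    {ℓ : ℕ} (hℓ : ℓ.Prime) (hodd : ℓ ≠ 2) {a : ℕ} (ha : 0 < a) :
    (∃ I : Ideal (Subring.closure {τ}),
        IsPrimitiveIdeal (Subring.closure {τ}) I ∧ IsProperIdeal (Subring.closure {τ}) I ∧
        IsRealIdeal σ (Subring.closure {τ}) I ∧
        Nat.card (Subring.closure {τ} ⧸ I) = ℓ ^ a) ↔
    a = padicValInt ℓ (T ^ 2 - 4 * N) := by
  have h := IsQuadraticGenerator.of_sq_sub_mul_add_eq_zero hτ hστ
  rw [h.exists_ideal_iff_of_odd (hℓ.odd_of_ne_two hodd).pow,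
    exists_eq_pow_mul_isCoprime_iff hℓ ha]

/-- Let `𝒪 = ℤ[τ]` be the order of discriminant `Δ` in an imaginary quadratic
field, `ℓ` an odd prime and `a ≥ 1`.  There exists a primitive, proper, real ideal of `𝒪` of
index `ℓ^a` iff `a = ord_ℓ(Δ)`. -/
theorem exists_primitive_proper_real_odd_prime_power
    (K : Type*) [Field K] [Algebra ℚ K]
    (hdim : Module.finrank ℚ K = 2) (himag : IsEmpty (K →+* ℝ))
    (σ : K →+* K) (hσ : σ ≠ RingHom.id K)
    (Δ : ℤ) (hΔneg : Δ < 0) (hΔmod : Δ % 4 = 0 ∨ Δ % 4 = 1)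
    (τ : K) (hτ : τ ^ 2 - (Δ : K) * τ + (((Δ ^ 2 - Δ) / 4 : ℤ) : K) = 0)
    (ℓ : ℕ) (hℓ : ℓ.Prime) (hodd : ℓ ≠ 2) (a : ℕ) (ha : 0 < a) :
    (∃ I : Ideal (Subring.closure {τ} : Subring K),
        IsPrimitiveIdeal (Subring.closure {τ}) I ∧ IsProperIdeal (Subring.closure {τ}) I ∧
        IsRealIdeal σ (Subring.closure {τ}) I ∧
        Nat.card ((Subring.closure {τ} : Subring K) ⧸ I) = ℓ ^ a) ↔
    a = padicValInt ℓ Δ := by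
  have : CharZero K := algebraRat.charZero K
  have hdisc := sq_sub_four_mul_ediv_four hΔmod
  have hsq : ¬ IsSquare (Δ ^ 2 - 4 * ((Δ ^ 2 - Δ) / 4)) := by
    rw [hdisc]
    exact fun h ↦ h.nonneg.not_gt hΔneg
  have hστ := map_ne_self_of_not_isSquare_discr hdim hσ hτ hsq
  rw [exists_primitive_proper_real_odd_prime_power_general hτ hστ hℓ hodd ha, hdisc]
end

section
/- Let K be an imaginary quadratic field, let 𝒪 = ℤ + 𝔣𝒪_K and 𝒪′ = ℤ + 𝔣′𝒪_K be orders of conductors 𝔣 and 𝔣′ with 𝔣′ ∣ 𝔣, and let 𝔞 be a proper fractional 𝒪-ideal. Then the quotient group (𝔞𝒪′)/𝔞 is cyclic of order 𝔣/𝔣′. -/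
variable {K : Type*} [Field K]

/-- The order `ℤ + f·𝒪_K` of conductor `f` in `K` (as the subring generated by `f·𝒪_K`). -/
noncomputable def condOrder (K : Type*) [Field K] (f : ℕ) : Subring K :=
  Subring.closure ((fun y : K => (f : K) * y) '' (integralClosure ℤ K : Set K))

/-- `M` is a fractional `O`-ideal. -/
def IsFracIdeal (O : Subring K) (M : Submodule ℤ K) : Prop :=
  M ≠ ⊥ ∧ (∀ o ∈ O, ∀ m ∈ M, o * m ∈ M) ∧
    ∃ d ∈ O, d ≠ 0 ∧ ∀ m ∈ M, d * m ∈ O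

/-- A fractional `O`-ideal `M` is *proper* if `{x ∈ K : xM ⊆ M} = O`. -/
def IsProperFracIdeal (O : Subring K) (M : Submodule ℤ K) : Prop :=
  ∀ x : K, (∀ m ∈ M, x * m ∈ M) ↔ x ∈ O

/-- The fractional `O'`-ideal `M·O'`. -/
def extIdeal (O' : Subring K) (M : Submodule ℤ K) : Submodule ℤ K :=
  Submodule.span ℤ {z : K | ∃ a ∈ M, ∃ b ∈ O', z = a * b}

/-!
Write `L = 𝔞𝒪′`, a lattice of rank 2. If `𝔞 ⊆ dL` then `L = 𝔞𝒪′ ⊆ dL𝒪′ = dL`, so `d = ±1`: the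
elementary divisors of `𝔞` in `L` are coprime, and `L/𝔞` is cyclic. Its order is therefore its
exponent. Since `𝔞` is proper, `nL ⊆ 𝔞` means `n𝒪′ ⊆ (𝔞 : 𝔞) = 𝒪`, that is, `n f′ 𝒪_K ⊆ ℤ + f 𝒪_K`.
As `𝒪_K/ℤ` is free and nonzero, this holds exactly when `f ∣ n f′`.
-/

open Module Pointwise

section PrincipalIdealRing

variable {R V : Type*} [CommRing R] [IsDomain R] [IsPrincipalIdealRing R] [AddCommGroup V]
  [Module R V]

theorem exists_basis_span_range_smul_eq {ι : Type*} [Finite ι] (b : Basis ι R V)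
    (N : Submodule R V) :
    ∃ (e : Basis ι R V) (c : ι → R), N = Submodule.span R (Set.range fun i => c i • e i) := by
  obtain ⟨n, s⟩ := N.smithNormalForm b
  have hN : N = Submodule.span R (Set.range fun j => s.a j • s.bM (s.f j)) := by
    rw [← funext s.snf, Set.range_comp' Subtype.val, ← N.coe_subtype, ← Submodule.map_span,
      s.bN.span_eq, N.map_subtype_top]
  refine ⟨s.bM, Function.extend s.f s.a 0, hN.trans (le_antisymm ?_ ?_)⟩ <;>
    refine Submodule.span_le.mpr (Set.range_subset_iff.mpr fun i => ?_)
  · exact Submodule.subset_span ⟨s.f i, by simp only [s.f.injective.extend_apply]⟩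
  · by_cases hi : ∃ j, s.f j = i
    · obtain ⟨j, rfl⟩ := hi
      exact Submodule.subset_span ⟨j, by simp only [s.f.injective.extend_apply]⟩
    · simp [Function.extend_apply' _ _ _ hi]

theorem isPrincipal_top_quotient_of_forall_isUnit (b : Basis (Fin 2) R V) {N : Submodule R V}
    (hN : ∀ d : R, N ≤ d • (⊤ : Submodule R V) → IsUnit d) :
    (⊤ : Submodule R (V ⧸ N)).IsPrincipal := by
  obtain ⟨e, c, rfl⟩ := exists_basis_span_range_smul_eq b N
  set N := Submodule.span R (Set.range fun i => c i • e i)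
  have hrel : IsRelPrime (c 0) (c 1) := fun d h0 h1 => hN d <| by
    refine Submodule.span_le.mpr (Set.range_subset_iff.mpr fun i => ?_)
    obtain ⟨t, ht⟩ : d ∣ c i := by fin_cases i <;> assumption
    rw [ht, mul_smul]
    exact Submodule.smul_mem_pointwise_smul _ _ _ trivial
  obtain ⟨u, v, huv⟩ := hrel.isCoprime
  have hmk (i) : c i • N.mkQ (e i) = 0 := by
    rw [← map_smul, Submodule.mkQ_apply, Submodule.Quotient.mk_eq_zero]
    exact Submodule.subset_span ⟨i, rfl⟩
  have he0 : N.mkQ (e 0) = (v * c 1) • N.mkQ (e 0 + e 1) := by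
    rw [map_add]
    linear_combination (norm := module) u • hmk 0 - v • hmk 1 - huv • N.mkQ (e 0)
  have he1 : N.mkQ (e 1) = (u * c 0) • N.mkQ (e 0 + e 1) := by
    rw [map_add]
    linear_combination (norm := module) v • hmk 1 - u • hmk 0 - huv • N.mkQ (e 1)
  refine ⟨N.mkQ (e 0 + e 1), (top_le_iff.mp ?_).symm⟩
  rw [← N.range_mkQ, LinearMap.range_eq_map, ← e.span_eq, Submodule.map_span_le]
  rintro _ ⟨i, rfl⟩
  rw [Submodule.mem_span_singleton]
  fin_cases i
  exacts [⟨_, he0.symm⟩, ⟨_, he1.symm⟩]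

end PrincipalIdealRing

theorem isAddCyclic_of_isPrincipal_top {V : Type*} [AddCommGroup V]
    (h : (⊤ : Submodule ℤ V).IsPrincipal) : IsAddCyclic V := by
  obtain ⟨v, hv⟩ := h
  exact ⟨v, fun x => Submodule.mem_span_singleton.mp (hv ▸ Submodule.mem_top)⟩

theorem exists_injective_of_smul_le {R A : Type*} [CommRing R] [CommRing A] [IsDomain A]
    [Algebra R A] {N P : Submodule R A} {a : A} (ha : a ≠ 0) (h : a • N ≤ P) :
    ∃ g : N →ₗ[R] P, Function.Injective g :=
  ⟨(LinearMap.mulLeft R a).restrict fun x hx => h (Submodule.smul_mem_pointwise_smul x a N hx),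
    fun _ _ hxy => Subtype.ext (mul_left_cancel₀ ha (congrArg Subtype.val hxy))⟩

theorem exponent_quotient_comap_subtype_dvd_iff {V : Type*} [AddCommGroup V]
    {L M : Submodule ℤ V} {n : ℕ} :
    AddMonoid.exponent (L ⧸ M.comap L.subtype) ∣ n ↔ (n : ℤ) • L ≤ M := by
  rw [AddMonoid.exponent_dvd_iff_forall_nsmul_eq_zero,
    (Submodule.Quotient.mk_surjective _).forall]
  simp [← Submodule.Quotient.mk_smul, Submodule.Quotient.mk_eq_zero, SetLike.le_def,
    Submodule.mem_smul_pointwise_iff_exists]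

theorem isTorsionFree_integralClosure_quotient_one (A F L : Type*) [CommRing A] [IsDomain A]
    [IsIntegrallyClosed A] [Field F] [Algebra A F] [IsFractionRing A F] [Field L] [Algebra F L]
    [Algebra A L] [IsScalarTower A F L] :
    IsTorsionFree A (integralClosure A L ⧸ (1 : Submodule A (integralClosure A L))) := by
  refine isTorsionFree_iff_smul_eq_zero.mpr fun a q haq => or_iff_not_imp_left.mpr fun ha => ?_
  obtain ⟨x, rfl⟩ := Submodule.Quotient.mk_surjective _ q
  rw [← Submodule.Quotient.mk_smul, Submodule.Quotient.mk_eq_zero, Submodule.mem_one] at haq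
  rw [Submodule.Quotient.mk_eq_zero, Submodule.mem_one]
  obtain ⟨k, hk⟩ := haq
  have haF : algebraMap A F a ≠ 0 := by simpa using ha
  have hx : algebraMap F L (algebraMap A F k / algebraMap A F a) = x := by
    have hkx : algebraMap A L k = algebraMap A L a * x := by
      simpa [Algebra.smul_def] using congrArg Subtype.val hk
    rw [map_div₀, div_eq_iff (by simpa using haF), ← IsScalarTower.algebraMap_apply,
      ← IsScalarTower.algebraMap_apply, hkx, mul_comm]
  obtain ⟨t, ht⟩ := IsIntegrallyClosed.isIntegral_iff.mp <|
    (isIntegral_algebraMap_iff (algebraMap F L).injective).mp (hx ▸ x.2)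
  exact ⟨t, Subtype.ext (by rw [← hx, ← ht, ← IsScalarTower.algebraMap_apply]; rfl)⟩

theorem exists_surjective_integralClosure_map_one_eq_zero (A F L : Type*) [CommRing A]
    [IsDomain A] [IsPrincipalIdealRing A] [Field F] [Algebra A F] [IsFractionRing A F] [Field L]
    [Algebra F L] [Algebra A L] [IsScalarTower A F L] [Algebra.IsSeparable F L]
    (hFL : 1 < finrank F L) :
    ∃ φ : integralClosure A L →ₗ[A] A, Function.Surjective φ ∧ φ 1 = 0 := by
  let Q := integralClosure A L ⧸ (1 : Submodule A (integralClosure A L))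
  have : FiniteDimensional F L := .of_finrank_pos (by lia)
  have : IsTorsionFree A L := .trans F
  have : Module.Finite A (integralClosure A L) := IsIntegralClosure.finite A F L _
  have : IsTorsionFree A Q := isTorsionFree_integralClosure_quotient_one A F L
  have : Module.Free A Q := free_of_finite_type_torsion_free'
  have : Nontrivial Q := by
    refine Submodule.Quotient.nontrivial_iff.mpr fun htop => hFL.not_ge ?_
    rw [← IsIntegralClosure.rank A F L (integralClosure A L)]
    refine finrank_le_one 1 fun x => ?_
    obtain ⟨a, rfl⟩ := Submodule.mem_one.mp (htop ▸ Submodule.mem_top (x := x))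
    exact ⟨a, (Algebra.algebraMap_eq_smul_one a).symm⟩
  obtain ⟨ψ, hψ⟩ : ∃ ψ : Q →ₗ[A] A, Function.Surjective ψ := by
    let b := Module.Free.chooseBasis A Q
    obtain ⟨i⟩ := b.index_nonempty
    exact ⟨b.coord i, fun a => ⟨a • b i, by simp⟩⟩
  have hone : Submodule.mkQ (1 : Submodule A (integralClosure A L)) 1 = 0 :=
    (Submodule.Quotient.mk_eq_zero _).mpr (Submodule.mem_one.mpr ⟨1, map_one _⟩)
  exact ⟨ψ ∘ₗ Submodule.mkQ _, hψ.comp (Submodule.mkQ_surjective _), by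
    rw [LinearMap.comp_apply, hone, map_zero]⟩

/-- A subring `O` of `K` regarded as a `ℤ`-submodule, so that it can be multiplied with the
additive subgroups of `K` on which it acts. -/
abbrev subringSubmodule (O : Subring K) : Submodule ℤ K :=
  Subalgebra.toSubmodule (subalgebraOfSubring O)

section ExtIdeal

variable {O O' : Subring K} {M : Submodule ℤ K}

theorem extIdeal_eq_mul (O : Subring K) (M : Submodule ℤ K) :
    extIdeal O M = M * subringSubmodule O := by
  rw [Submodule.mul_eq_span_mul_set, extIdeal]
  congr 1
  ext z
  simp [Set.mem_mul, eq_comm]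

theorem le_extIdeal (O : Subring K) (M : Submodule ℤ K) : M ≤ extIdeal O M := fun x hx =>
  Submodule.subset_span ⟨x, hx, 1, one_mem O, (mul_one x).symm⟩

theorem extIdeal_mul_subringSubmodule (O : Subring K) (M : Submodule ℤ K) :
    extIdeal O M * subringSubmodule O = extIdeal O M := by
  rw [extIdeal_eq_mul, mul_assoc, Subalgebra.isIdempotentElem_toSubmodule]

theorem extIdeal_le_smul_extIdeal {d : ℤ} (h : M ≤ d • extIdeal O M) :
    extIdeal O M ≤ d • extIdeal O M :=
  calc extIdeal O M = M * subringSubmodule O := extIdeal_eq_mul O M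
    _ ≤ d • extIdeal O M * subringSubmodule O := mul_le_mul_left h _
    _ = d • extIdeal O M := by rw [smul_mul_assoc, extIdeal_mul_subringSubmodule]

theorem isAddCyclic_extIdeal_quotient (b : Basis (Fin 2) ℤ (extIdeal O M)) :
    IsAddCyclic (extIdeal O M ⧸ M.comap (extIdeal O M).subtype) := by
  refine isAddCyclic_of_isPrincipal_top
    (isPrincipal_top_quotient_of_forall_isUnit b fun d hd => ?_)
  have hM : M ≤ d • extIdeal O M := by
    simpa [Submodule.map_comap_subtype, Submodule.map_pointwise_smul, le_extIdeal] using
      Submodule.map_mono (f := (extIdeal O M).subtype) hd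
  obtain ⟨y, hy, hyd⟩ := extIdeal_le_smul_extIdeal hM (b 0).2
  have hb : d • (⟨y, hy⟩ : extIdeal O M) = b 0 := Subtype.ext hyd
  exact .of_mul_eq_one (b.repr ⟨y, hy⟩ 0) <| by
    simpa only [map_smul, Finsupp.smul_apply, b.repr_self, Finsupp.single_eq_same, smul_eq_mul]
      using congrArg (b.repr · 0) hb

theorem IsProperFracIdeal.smul_extIdeal_le_iff (hM : IsProperFracIdeal O M) {n : ℤ} :
    n • extIdeal O' M ≤ M ↔ ∀ x ∈ O', (n : K) * x ∈ O := by
  have hdiv : M / M = subringSubmodule O :=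
    Submodule.ext fun x => Submodule.mem_div_iff_forall_mul_mem.trans (hM x)
  rw [extIdeal_eq_mul, mul_comm, ← smul_mul_assoc, ← Submodule.le_div_iff_mul_le, hdiv]
  simp [SetLike.le_def, Submodule.mem_smul_pointwise_iff_exists]

end ExtIdeal

theorem natCast_mul_mem_condOrder {f : ℕ} {y : K} (hy : y ∈ integralClosure ℤ K) :
    (f : K) * y ∈ condOrder K f :=
  Subring.subset_closure ⟨y, hy, rfl⟩

theorem mem_condOrder_iff {f : ℕ} {x : K} :
    x ∈ condOrder K f ↔ ∃ k : ℤ, ∃ y ∈ integralClosure ℤ K, x = k + f * y := by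
  refine ⟨fun hx => ?_, ?_⟩
  · induction hx using Subring.closure_induction with
    | mem x hx =>
      obtain ⟨y, hy, rfl⟩ := hx
      exact ⟨0, y, hy, by simp⟩
    | zero => exact ⟨0, 0, zero_mem _, by simp⟩
    | one => exact ⟨1, 0, zero_mem _, by simp⟩
    | add x y _ _ hx hy =>
      obtain ⟨k, a, ha, rfl⟩ := hx
      obtain ⟨l, b, hb, rfl⟩ := hy
      exact ⟨k + l, a + b, add_mem ha hb, by push_cast; ring⟩
    | neg x _ hx =>
      obtain ⟨k, a, ha, rfl⟩ := hx
      exact ⟨-k, -a, neg_mem ha, by push_cast; ring⟩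
    | mul x y _ _ hx hy =>
      obtain ⟨k, a, ha, rfl⟩ := hx
      obtain ⟨l, b, hb, rfl⟩ := hy
      refine ⟨k * l, k * b + l * a + f * (a * b), ?_, by push_cast; ring⟩
      exact add_mem (add_mem (mul_mem (intCast_mem _ _) hb) (mul_mem (intCast_mem _ _) ha))
        (mul_mem (natCast_mem _ _) (mul_mem ha hb))
  · rintro ⟨k, y, hy, rfl⟩
    exact add_mem (intCast_mem _ _) (natCast_mul_mem_condOrder hy)

theorem condOrder_le_integralClosure (f : ℕ) :
    subringSubmodule (condOrder K f) ≤ Subalgebra.toSubmodule (integralClosure ℤ K) := by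
  intro x hx
  obtain ⟨k, y, hy, rfl⟩ := mem_condOrder_iff.mp hx
  exact add_mem (S := Subalgebra ℤ K) (intCast_mem _ k) (mul_mem (natCast_mem _ f) hy)

section Conductor

variable [Algebra ℚ K]

theorem forall_mul_mem_condOrder_iff (hK : 1 < finrank ℚ K) {f f' : ℕ} {n : ℤ} :
    (∀ x ∈ condOrder K f', (n : K) * x ∈ condOrder K f) ↔ (f : ℤ) ∣ f' * n := by
  constructor
  · intro h
    have : CharZero K := algebraRat.charZero K
    have : FiniteDimensional ℚ K := .of_finrank_pos (by lia)
    obtain ⟨φ, hφ, hφ1⟩ := exists_surjective_integralClosure_map_one_eq_zero ℤ ℚ K hK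
    obtain ⟨y, hy⟩ := hφ 1
    obtain ⟨k, z, hz, e⟩ := mem_condOrder_iff.mp (h _ (natCast_mul_mem_condOrder y.2))
    have hyz : (f' * n : ℤ) • y = k • (1 : integralClosure ℤ K) + (f : ℤ) • ⟨z, hz⟩ := by
      ext
      simpa [mul_left_comm, mul_assoc] using e
    exact ⟨φ ⟨z, hz⟩, by simpa only [map_add, map_smul, hy, hφ1, smul_eq_mul, mul_one, mul_zero,
      zero_add] using congrArg φ hyz⟩
  · rintro ⟨t, ht⟩ x hx
    obtain ⟨k, y, hy, rfl⟩ := mem_condOrder_iff.mp hx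
    have ht' : (f' * n : K) = f * t := by exact_mod_cast congrArg (Int.cast : ℤ → K) ht
    exact mem_condOrder_iff.mpr ⟨n * k, t * y, mul_mem (intCast_mem _ _) hy, by
      push_cast; linear_combination y * ht'⟩

theorem finite_and_finrank_extIdeal_condOrder [FiniteDimensional ℚ K] {f f' : ℕ} (hf' : f' ≠ 0)
    {M : Submodule ℤ K} (hM : IsFracIdeal (condOrder K f) M) :
    Module.Finite ℤ (extIdeal (condOrder K f') M) ∧
      finrank ℤ (extIdeal (condOrder K f') M) = finrank ℚ K := by
  have : CharZero K := algebraRat.charZero K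
  obtain ⟨hne, -, d, -, hd0, hd⟩ := hM
  obtain ⟨a, ha, ha0⟩ := M.ne_bot_iff.mp hne
  let C := Subalgebra.toSubmodule (integralClosure ℤ K)
  have : Module.Finite ℤ C := IsIntegralClosure.finite ℤ ℚ K (integralClosure ℤ K)
  have hupper : d • extIdeal (condOrder K f') M ≤ C := by
    have hdM : d • M ≤ C := by
      rintro _ ⟨m, hm, rfl⟩
      exact condOrder_le_integralClosure f (hd m hm)
    calc d • extIdeal (condOrder K f') M
        = d • M * subringSubmodule (condOrder K f') := by rw [extIdeal_eq_mul, smul_mul_assoc]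
      _ ≤ C * C := mul_le_mul' hdM (condOrder_le_integralClosure f')
      _ = C := Subalgebra.isIdempotentElem_toSubmodule _
  have hlower : (a * f') • C ≤ extIdeal (condOrder K f') M := by
    rintro _ ⟨y, hy, rfl⟩
    exact Submodule.subset_span ⟨a, ha, _, natCast_mul_mem_condOrder hy, mul_assoc a _ y⟩
  obtain ⟨g, hg⟩ := exists_injective_of_smul_le hd0 hupper
  obtain ⟨h, hh⟩ := exists_injective_of_smul_le (mul_ne_zero ha0 (Nat.cast_ne_zero.mpr hf')) hlower
  have hfin : Module.Finite ℤ (extIdeal (condOrder K f') M) := .of_injective g hg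
  refine ⟨hfin, ?_⟩
  rw [← IsIntegralClosure.rank ℤ ℚ K (integralClosure ℤ K)]
  exact le_antisymm (LinearMap.finrank_le_finrank_of_injective hg)
    (LinearMap.finrank_le_finrank_of_injective hh)

end Conductor

theorem quotient_extIdeal_cyclic_general
    (K : Type*) [Field K] [Algebra ℚ K] (hdim : finrank ℚ K = 2)
    (f f' : ℕ) (hf' : 0 < f') (hdvd : f' ∣ f) (M : Submodule ℤ K)
    (hfrac : IsFracIdeal (condOrder K f) M) (hprop : IsProperFracIdeal (condOrder K f) M) :
    IsAddCyclic ((extIdeal (condOrder K f') M) ⧸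
        (M.comap (extIdeal (condOrder K f') M).subtype)) ∧
    Nat.card ((extIdeal (condOrder K f') M) ⧸
        (M.comap (extIdeal (condOrder K f') M).subtype)) = f / f' := by
  have : CharZero K := algebraRat.charZero K
  have : FiniteDimensional ℚ K := .of_finrank_pos (by lia)
  obtain ⟨hfin, hrank⟩ := finite_and_finrank_extIdeal_condOrder hf'.ne' hfrac
  have hcyc := isAddCyclic_extIdeal_quotient (finBasisOfFinrankEq ℤ _ (hrank.trans hdim))
  refine ⟨hcyc, ?_⟩
  rw [← IsAddCyclic.exponent_eq_card]
  refine Nat.dvd_right_iff_eq.mp fun n => ?_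
  rw [exponent_quotient_comap_subtype_dvd_iff, hprop.smul_extIdeal_le_iff,
    Nat.div_dvd_iff_dvd_mul hdvd hf', ← Int.natCast_dvd_natCast, Nat.cast_mul]
  exact forall_mul_mem_condOrder_iff (by rw [hdim]; norm_num)

/-- Let `K` be an imaginary quadratic field, `𝒪 = ℤ + f𝒪_K` and
`𝒪′ = ℤ + f′𝒪_K` orders of conductors `f` and `f′` with `f′ ∣ f`, and `𝔞` a proper
fractional `𝒪`-ideal.  Then the quotient group `(𝔞𝒪′)/𝔞` is cyclic of order `f/f′`. -/
theorem quotient_extIdeal_cyclic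
    (K : Type*) [Field K] [Algebra ℚ K]
    (hdim : Module.finrank ℚ K = 2) (himag : IsEmpty (K →+* ℝ))
    (f f' : ℕ) (hf' : 0 < f') (hdvd : f' ∣ f)
    (M : Submodule ℤ K)
    (hfrac : IsFracIdeal (condOrder K f) M)
    (hprop : IsProperFracIdeal (condOrder K f) M) :
    IsAddCyclic ((extIdeal (condOrder K f') M) ⧸
        (M.comap (extIdeal (condOrder K f') M).subtype)) ∧
    Nat.card ((extIdeal (condOrder K f') M) ⧸
        (M.comap (extIdeal (condOrder K f') M).subtype)) = f / f' := by
  exact quotient_extIdeal_cyclic_general K hdim f f' hf' hdvd M hfrac hprop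
end

section
/- Let K be an imaginary quadratic field, ℓ a prime ramified in K, 𝔭 the prime above ℓ, and b a positive integer. Inside the group 𝔭^{-(2b-1)}/𝒪_K ≅ ℤ/ℓ^bℤ × ℤ/ℓ^{b−1}ℤ, the element x = 1/ℓ^{b−1} + 𝒪_K generates a pure subgroup; that is, for all positive integers m and i, if there exists y ∈ 𝔭^{-(2b-1)}/𝒪_K with m·x = ℓ^i·y, then there exists n ∈ ℤ with m·x = ℓ^i·n·x. Consequently ⟨x⟩ is a direct summand of 𝔭^{-(2b-1)}/𝒪_K. -/
variable {K : Type*} [Field K]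

/-- The ring of integers `𝒪_K` of `K`, as a subring. -/
noncomputable def ringOfInt (K : Type*) [Field K] : Subring K :=
  (integralClosure ℤ K).toSubring

/-- The additive subgroup `𝔭^{-d} = {x ∈ K : x·𝔭^d ⊆ 𝒪_K}` of `K`. -/
def invPow (𝔭 : Ideal (ringOfInt K)) (d : ℕ) : AddSubgroup K where
  carrier := {x : K | ∀ y : ringOfInt K, y ∈ 𝔭 ^ d → x * (y : K) ∈ ringOfInt K}
  zero_mem' := fun y _ => by simpa using (ringOfInt K).zero_mem
  add_mem' := fun {a b} ha hb y hy => by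
    simpa [add_mul] using (ringOfInt K).add_mem (ha y hy) (hb y hy)
  neg_mem' := fun {a} ha y hy => by
    simpa [neg_mul] using (ringOfInt K).neg_mem (ha y hy)

/-!
If `u ∈ 𝔭 ∩ ℤ`, then `u ^ 2 ∈ 𝔭 ^ 2 = (ℓ)`, so `ℓ ∣ u ^ 2` in `ℤ` and `ℓ ∣ u`; thus `𝔭 ∩ ℤ = ℓℤ`.
Also `𝔭^{-(2b-1)} = ℓ^{-b} 𝔭`. Put `c = ℓ ^ (b - 1)`, and suppose that `m / c` and `k z / (c ℓ)`
with `z ∈ 𝔭` agree modulo `𝒪_K`. For `g = gcd(k, c)` this gives `m ℓ = g w` with `w ∈ 𝔭`. Being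
rational and integral, `w` lies in `𝔭 ∩ ℤ = ℓℤ`, so `g ∣ m`, and by Bézout `m` is a multiple of `k`
modulo `c`. This is purity.

A pure cyclic subgroup `⟨x⟩` of `P` of finite order `n` meets `n P` trivially, so it embeds in
`P / n P`, and a faithful character of it extends to `P / n P` because `ℚ/ℤ` is injective. The
values of the extension are `n`-torsion, hence already taken on `⟨x⟩`, so its kernel is a
complement.
-/

section PureSubgroups

variable {A : Type*} [AddCommGroup A]

/-- `H` is a pure subgroup of `P`: an element of `H` that is divisible by an integer `k` in `P` is
divisible by `k` in `H`. Both are subgroups of an ambient group, and `H ≤ P` is not part of the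
definition. -/
def IsPureIn (H P : AddSubgroup A) : Prop :=
  ∀ k : ℤ, ∀ y ∈ P, k • y ∈ H → ∃ h ∈ H, k • y = k • h

theorem isPureIn_zmultiples_iff {x : A} {P : AddSubgroup A} :
    IsPureIn (AddSubgroup.zmultiples x) P ↔
      ∀ m k : ℤ, (∃ y ∈ P, m • x = k • y) → ∃ n : ℤ, m • x = (k * n) • x := by
  constructor
  · rintro hpure m k ⟨y, hy, hmy⟩
    obtain ⟨_, ⟨n, rfl⟩, hn⟩ := hpure k y hy ⟨m, hmy⟩
    exact ⟨n, by rw [hmy, hn, mul_smul]⟩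
  · rintro hpure k y hy ⟨m, hmy : m • x = k • y⟩
    obtain ⟨n, hn⟩ := hpure m k ⟨y, hy, hmy⟩
    exact ⟨n • x, ⟨n, rfl⟩, by rw [← hmy, ← mul_smul, hn]⟩

theorem exists_character_apply_eq {x : A} {u : AddCircle (1 : ℚ)}
    (hu : addOrderOf u ∣ addOrderOf x) : ∃ χ : A →+ AddCircle (1 : ℚ), χ x = u := by
  let g : AddSubgroup.zmultiples x := ⟨x, AddSubgroup.mem_zmultiples x⟩
  have hg : ∀ y, y ∈ AddSubgroup.zmultiples g := by
    rintro ⟨_, k, rfl⟩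
    exact ⟨k, rfl⟩
  have hug : addOrderOf u ∣ addOrderOf g := by rwa [← AddSubgroup.addOrderOf_coe]
  let φ : CharacterModule (AddSubgroup.zmultiples x) := addMonoidHomOfForallMemZMultiples hg hug
  obtain ⟨χ, hχ⟩ := CharacterModule.dual_surjective_of_injective
    (AddSubgroup.zmultiples x).subtype.toIntLinearMap Subtype.val_injective φ
  exact ⟨χ, (DFunLike.congr_fun hχ g).trans (addMonoidHomOfForallMemZMultiples_apply_gen hg hug)⟩

theorem exists_zsmul_one_div_eq_of_nsmul_eq_zero {n : ℕ} (hn : 0 < n)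
    {v : AddCircle (1 : ℚ)} (hv : n • v = 0) :
    ∃ k : ℤ, k • ((1 / n : ℚ) : AddCircle (1 : ℚ)) = v := by
  obtain ⟨m, -, rfl⟩ := (AddCircle.nsmul_eq_zero_iff hn).1 hv
  refine ⟨m, ?_⟩
  rw [← AddCircle.coe_zsmul]
  congr 1
  simp [div_eq_mul_inv]

theorem IsPureIn.exists_addMonoidHom_apply_eq_one_div {x : A} {P : AddSubgroup A}
    (hpure : IsPureIn (AddSubgroup.zmultiples x) P) (hx : IsOfFinAddOrder x) :
    ∃ χ : A →+ AddCircle (1 : ℚ), χ x = ((1 / addOrderOf x : ℚ) : AddCircle (1 : ℚ)) ∧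
      ∀ y ∈ P, addOrderOf x • χ y = 0 := by
  set n := addOrderOf x
  let nP := P.map (nsmulAddMonoidHom n)
  have hdvd : n ∣ addOrderOf (QuotientAddGroup.mk' nP x) := by
    set d := addOrderOf (QuotientAddGroup.mk' nP x)
    have hd : QuotientAddGroup.mk' nP (d • x) = 0 := by rw [map_nsmul, addOrderOf_nsmul_eq_zero]
    obtain ⟨y, hy, hny : n • y = d • x⟩ := (QuotientAddGroup.eq_zero_iff _).1 hd
    have hny' : (n : ℤ) • y = (d : ℤ) • x := by simpa only [natCast_zsmul] using hny
    obtain ⟨_, ⟨k, rfl⟩, hk⟩ := hpure n y hy ⟨d, hny'.symm⟩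
    apply addOrderOf_dvd_of_nsmul_eq_zero
    rw [← hny, ← natCast_zsmul, hk, smul_comm, natCast_zsmul, addOrderOf_nsmul_eq_zero, smul_zero]
  have hn : addOrderOf ((1 / n : ℚ) : AddCircle (1 : ℚ)) = n :=
    AddCircle.addOrderOf_period_div hx.addOrderOf_pos
  obtain ⟨χ, hχ⟩ := exists_character_apply_eq (hn.dvd.trans hdvd)
  refine ⟨χ.comp (QuotientAddGroup.mk' nP), hχ, fun y hy => ?_⟩
  have hny : QuotientAddGroup.mk' nP (n • y) = 0 :=
    (QuotientAddGroup.eq_zero_iff _).2 ⟨y, hy, rfl⟩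
  rw [← map_nsmul, AddMonoidHom.comp_apply, hny, map_zero]

theorem IsPureIn.exists_complement_zmultiples {x : A} {P : AddSubgroup A}
    (hpure : IsPureIn (AddSubgroup.zmultiples x) P) (hxP : x ∈ P) (hx : IsOfFinAddOrder x) :
    ∃ C ≤ P, AddSubgroup.zmultiples x ⊓ C = ⊥ ∧ AddSubgroup.zmultiples x ⊔ C = P := by
  obtain ⟨χ, hχx, hχP⟩ := hpure.exists_addMonoidHom_apply_eq_one_div hx
  refine ⟨P ⊓ χ.ker, inf_le_left, ?_, le_antisymm ?_ fun y hy => ?_⟩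
  · rw [eq_bot_iff]
    rintro _ ⟨⟨k, rfl⟩, -, hk : χ (k • x) = 0⟩
    have hdvd := addOrderOf_dvd_iff_zsmul_eq_zero.2 ((map_zsmul χ k x).symm.trans hk)
    rw [hχx, AddCircle.addOrderOf_period_div hx.addOrderOf_pos] at hdvd
    exact addOrderOf_dvd_iff_zsmul_eq_zero.1 hdvd
  · exact sup_le (AddSubgroup.zmultiples_le_of_mem hxP) inf_le_left
  · obtain ⟨k, hk⟩ := exists_zsmul_one_div_eq_of_nsmul_eq_zero hx.addOrderOf_pos (hχP y hy)
    have hker : χ (y - k • x) = 0 := by rw [map_sub, map_zsmul, hχx, hk, sub_self]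
    exact AddSubgroup.mem_sup.2 ⟨k • x, ⟨k, rfl⟩, y - k • x,
      ⟨P.sub_mem hy (P.zsmul_mem hxP k), hker⟩, add_sub_cancel _ _⟩

end PureSubgroups

/-- The reduction map `K → K/𝒪_K`. -/
noncomputable abbrev modRingOfInt (K : Type*) [Field K] : K →+ K ⧸ (ringOfInt K).toAddSubgroup :=
  QuotientAddGroup.mk' (ringOfInt K).toAddSubgroup

theorem modRingOfInt_eq_zero_iff {t : K} : modRingOfInt K t = 0 ↔ t ∈ ringOfInt K :=
  QuotientAddGroup.eq_zero_iff t

theorem mem_invPow_iff_of_mul_eq_span_singleton {𝔭 J : Ideal (ringOfInt K)} {d : ℕ}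
    {c : ringOfInt K} (hc : c ≠ 0) (hJ : 𝔭 ^ d * J = Ideal.span {c}) {x : K} :
    x ∈ invPow 𝔭 d ↔ ∃ z ∈ J, x * c = z := by
  constructor
  · intro hx
    have hmul : ∀ w ∈ 𝔭 ^ d * J, ∃ z ∈ J, x * w = z := fun w hw => by
      induction hw using Submodule.mul_induction_on' with
      | mem_mul_mem y hy z hz =>
        exact ⟨⟨x * y, hx y hy⟩ * z, J.mul_mem_left _ hz, (mul_assoc x _ _).symm⟩
      | add w₁ _ w₂ _ h₁ h₂ =>
        obtain ⟨z₁, hz₁, h₁⟩ := h₁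
        obtain ⟨z₂, hz₂, h₂⟩ := h₂
        exact ⟨z₁ + z₂, J.add_mem hz₁ hz₂, by push_cast; rw [mul_add, h₁, h₂]⟩
    exact hmul c (hJ ▸ Ideal.mem_span_singleton_self c)
  · rintro ⟨z, hz, hxz⟩ y hy
    obtain ⟨t, ht⟩ := Ideal.mem_span_singleton.1 (hJ ▸ Ideal.mul_mem_mul hy hz)
    have hcK : (c : K) ≠ 0 := by exact_mod_cast hc
    have hyz : (y : K) * z = c * t := by exact_mod_cast ht
    have hxy : x * y = t := mul_right_cancel₀ hcK (by linear_combination y * hxz + hyz)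
    exact hxy ▸ t.2

theorem mul_zsmul_modRingOfInt_one_div (c k : ℤ) : (c * k) • modRingOfInt K (1 / c) = 0 := by
  rw [← map_zsmul, modRingOfInt_eq_zero_iff, zsmul_eq_mul]
  obtain hc | hc := eq_or_ne (c : K) 0
  · simp [hc]
  · have hk : ((c * k : ℤ) : K) * (1 / c) = k := by push_cast; field_simp
    exact hk ▸ intCast_mem _ k

theorem isOfFinAddOrder_modRingOfInt_one_div {c : ℤ} (hc : c ≠ 0) :
    IsOfFinAddOrder (modRingOfInt K (1 / c)) :=
  isOfFinAddOrder_iff_zsmul_eq_zero.2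
    ⟨c, hc, by simpa only [mul_one] using mul_zsmul_modRingOfInt_one_div (K := K) c 1⟩

section CharZero

variable [CharZero K]

theorem exists_intCast_eq_of_mul_eq {n u : ℤ} (hn : n ≠ 0) {t : ringOfInt K}
    (h : (n : ringOfInt K) * t = u) : ∃ k : ℤ, t = k ∧ n * k = u := by
  have hnK : (n : K) ≠ 0 := by exact_mod_cast hn
  have hK : (n : K) * t = u := by exact_mod_cast congrArg Subtype.val h
  have ht : (t : K) = algebraMap ℚ K (u / n) := by
    rw [map_div₀, map_intCast, map_intCast, eq_div_iff hnK, mul_comm, hK]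
  have hint : IsIntegral ℤ (u / n : ℚ) :=
    (isIntegral_algebraMap_iff (algebraMap ℚ K).injective).1 (ht ▸ t.2)
  obtain ⟨k, hk⟩ := IsIntegrallyClosed.isIntegral_iff.1 hint
  have htk : t = k := Subtype.ext (by rw [ht, ← hk]; simp)
  refine ⟨k, htk, ?_⟩
  rw [htk] at hK
  exact_mod_cast hK

theorem intCast_dvd_intCast_iff {n u : ℤ} (hn : n ≠ 0) :
    (n : ringOfInt K) ∣ u ↔ n ∣ u := by
  refine ⟨fun ⟨t, ht⟩ => ?_, fun h => Int.cast_dvd_cast _ _ h⟩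
  obtain ⟨k, -, hk⟩ := exists_intCast_eq_of_mul_eq hn ht.symm
  exact ⟨k, hk.symm⟩

theorem under_int_eq_span_of_pow_eq_span {𝔭 : Ideal (ringOfInt K)} {e ℓ : ℕ} (he : e ≠ 0)
    (hℓ : Squarefree ℓ) (hram : 𝔭 ^ e = Ideal.span {(ℓ : ringOfInt K)}) :
    𝔭.under ℤ = Ideal.span {(ℓ : ℤ)} := by
  ext u
  rw [Ideal.mem_under, Ideal.mem_span_singleton, eq_intCast]
  constructor
  · intro hu
    have hdvd : ((ℓ : ℤ) : ringOfInt K) ∣ (u ^ e : ℤ) := by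
      push_cast
      exact Ideal.mem_span_singleton.1 (hram ▸ Ideal.pow_mem_pow hu e)
    rw [intCast_dvd_intCast_iff (by exact_mod_cast hℓ.ne_zero)] at hdvd
    exact ((Int.squarefree_natCast.2 hℓ).dvd_pow_iff_dvd he).1 hdvd
  · rintro ⟨k, rfl⟩
    have hmem : (ℓ : ringOfInt K) ∈ 𝔭 :=
      Ideal.pow_le_self he (hram ▸ Ideal.mem_span_singleton_self _)
    push_cast
    exact 𝔭.mul_mem_right _ hmem

theorem dvd_of_mul_eq_mul_mem {𝔮 : Ideal (ringOfInt K)} {ℓ : ℤ} (hℓ : ℓ ≠ 0)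
    (h𝔮 : 𝔮.under ℤ = Ideal.span {ℓ}) {g m : ℤ} (hg : g ≠ 0) {w : ringOfInt K} (hw : w ∈ 𝔮)
    (h : (g : ringOfInt K) * w = (m * ℓ : ℤ)) : g ∣ m := by
  obtain ⟨k, rfl, hk⟩ := exists_intCast_eq_of_mul_eq hg h
  have hkℓ : k ∈ 𝔮.under ℤ := hw
  obtain ⟨j, rfl⟩ := Ideal.mem_span_singleton.1 (h𝔮 ▸ hkℓ)
  exact ⟨j, mul_right_cancel₀ hℓ (by linear_combination -hk)⟩

theorem gcd_dvd_of_mul_eq_add {𝔮 : Ideal (ringOfInt K)} {ℓ : ℤ} (hℓ : ℓ ≠ 0)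
    (h𝔮 : 𝔮.under ℤ = Ideal.span {ℓ}) {m k c : ℤ} (hc : c ≠ 0) {z w : ringOfInt K} (hz : z ∈ 𝔮)
    (hw : w ∈ 𝔮) (h : (m * ℓ : ringOfInt K) = k * z + c * w) : (k.gcd c : ℤ) ∣ m := by
  obtain ⟨k', hk'⟩ := Int.gcd_dvd_left k c
  obtain ⟨c', hc'⟩ := Int.gcd_dvd_right k c
  have hg : (k.gcd c : ℤ) ≠ 0 := by exact_mod_cast (Int.gcd_pos_of_ne_zero_right k hc).ne'
  refine dvd_of_mul_eq_mul_mem hℓ h𝔮 hg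
    (𝔮.add_mem (𝔮.mul_mem_left (k' : ringOfInt K) hz) (𝔮.mul_mem_left (c' : ringOfInt K) hw)) ?_
  have hkR := congrArg (Int.cast (R := ringOfInt K)) hk'
  have hcR := congrArg (Int.cast (R := ringOfInt K)) hc'
  push_cast at hkR hcR ⊢
  linear_combination -h - z * hkR - w * hcR

theorem isPureIn_zmultiples_one_div {𝔮 : Ideal (ringOfInt K)} {ℓ c : ℤ} (hℓ : ℓ ≠ 0) (hc : c ≠ 0)
    (h𝔮 : 𝔮.under ℤ = Ideal.span {ℓ}) {P : AddSubgroup K}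
    (hP : ∀ y ∈ P, ∃ z ∈ 𝔮, y * (c * ℓ) = z) :
    IsPureIn (AddSubgroup.zmultiples (modRingOfInt K (1 / c))) (P.map (modRingOfInt K)) := by
  have hcK : (c : K) ≠ 0 := by exact_mod_cast hc
  have hℓ𝔮 : ℓ ∈ 𝔮.under ℤ := h𝔮 ▸ Ideal.mem_span_singleton_self ℓ
  rw [isPureIn_zmultiples_iff]
  rintro m k ⟨_, ⟨y, hy, rfl⟩, hmy⟩
  obtain ⟨z, hz, hyz⟩ := hP y hy
  have hmem : m • (1 / (c : K)) - k • y ∈ ringOfInt K := by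
    rw [← modRingOfInt_eq_zero_iff, map_sub, map_zsmul, map_zsmul, hmy, sub_self]
  obtain ⟨t, ht⟩ : ∃ t : ringOfInt K, t = m • (1 / (c : K)) - k • y := ⟨⟨_, hmem⟩, rfl⟩
  have hmℓ : (m * ℓ : ringOfInt K) = k * z + c * (t * ℓ) := Subtype.ext <| by
    push_cast
    rw [ht, ← hyz, zsmul_eq_mul, zsmul_eq_mul]
    field_simp
    ring
  obtain ⟨j, hj⟩ := gcd_dvd_of_mul_eq_add hℓ h𝔮 hc hz (𝔮.mul_mem_left t hℓ𝔮) hmℓ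
  refine ⟨k.gcdA c * j, ?_⟩
  have hm : m = k * (k.gcdA c * j) + c * (k.gcdB c * j) := by
    rw [Int.gcd_eq_gcd_ab] at hj
    linear_combination hj
  conv_lhs => rw [hm, add_zsmul, mul_zsmul_modRingOfInt_one_div, add_zero]

theorem mem_invPow_iff_of_pow_eq_span {𝔭 : Ideal (ringOfInt K)} {e ℓ b : ℕ} (he : e ≠ 0)
    (hℓ : ℓ ≠ 0) (hram : 𝔭 ^ e = Ideal.span {(ℓ : ringOfInt K)}) (hb : 0 < b) {x : K} :
    x ∈ invPow 𝔭 (e * b - 1) ↔ ∃ z ∈ 𝔭, x * (ℓ : K) ^ b = z := by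
  have hc : (ℓ : ringOfInt K) ^ b ≠ 0 := pow_ne_zero b (by exact_mod_cast hℓ)
  have hmul : 𝔭 ^ (e * b - 1) * 𝔭 = Ideal.span {(ℓ : ringOfInt K) ^ b} := by
    rw [pow_sub_one_mul (mul_ne_zero he hb.ne'), pow_mul, hram, Ideal.span_singleton_pow]
  exact_mod_cast mem_invPow_iff_of_mul_eq_span_singleton hc hmul

end CharZero

theorem pure_subgroup_of_ramified_general [CharZero K] {𝔭 : Ideal (ringOfInt K)} {e ℓ b : ℕ}
    (he : e ≠ 0) (hℓ : Squarefree ℓ) (hram : 𝔭 ^ e = Ideal.span {(ℓ : ringOfInt K)})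
    (hb : 0 < b) :
    IsPureIn (AddSubgroup.zmultiples (modRingOfInt K (1 / (ℓ : K) ^ (b - 1))))
        ((invPow 𝔭 (e * b - 1)).map (modRingOfInt K)) ∧
      ∃ C ≤ (invPow 𝔭 (e * b - 1)).map (modRingOfInt K),
        AddSubgroup.zmultiples (modRingOfInt K (1 / (ℓ : K) ^ (b - 1))) ⊓ C = ⊥ ∧
        AddSubgroup.zmultiples (modRingOfInt K (1 / (ℓ : K) ^ (b - 1))) ⊔ C =
          (invPow 𝔭 (e * b - 1)).map (modRingOfInt K) := by
  have hℓ0 : (ℓ : ℤ) ≠ 0 := by exact_mod_cast hℓ.ne_zero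
  have hc : (ℓ : ℤ) ^ (b - 1) ≠ 0 := pow_ne_zero _ hℓ0
  have hcK : (ℓ : K) ^ (b - 1) = ((ℓ ^ (b - 1) : ℤ) : K) := by push_cast; rfl
  have hcℓ : ((ℓ ^ (b - 1) : ℤ) : K) * (ℓ : ℤ) = (ℓ : K) ^ b := by
    rw [← hcK, Int.cast_natCast, pow_sub_one_mul hb.ne']
  have hmem {y : K} := mem_invPow_iff_of_pow_eq_span he hℓ.ne_zero hram hb (x := y)
  have hx : 1 / ((ℓ ^ (b - 1) : ℤ) : K) ∈ invPow 𝔭 (e * b - 1) := by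
    refine hmem.2 ⟨ℓ, Ideal.pow_le_self he (hram ▸ Ideal.mem_span_singleton_self _), ?_⟩
    have hcK0 : ((ℓ ^ (b - 1) : ℤ) : K) ≠ 0 := by exact_mod_cast hc
    rw [← hcℓ, ← mul_assoc, one_div_mul_cancel hcK0, one_mul]
    simp
  have hpure := isPureIn_zmultiples_one_div hℓ0 hc (under_int_eq_span_of_pow_eq_span he hℓ hram)
    fun y hy => hcℓ ▸ hmem.1 hy
  rw [hcK]
  exact ⟨hpure, hpure.exists_complement_zmultiples ⟨_, hx, rfl⟩
    (isOfFinAddOrder_modRingOfInt_one_div hc)⟩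

/-- Let `K` be an imaginary quadratic field, `ℓ` a prime ramified in `K`,
`𝔭` the prime above `ℓ`, and `b ≥ 1`.  In `𝔭^{-(2b-1)}/𝒪_K`, the element
`x = 1/ℓ^{b-1} + 𝒪_K` generates a pure subgroup: for all `m, i > 0`, if `m·x = ℓ^i·y` for
some `y ∈ 𝔭^{-(2b-1)}/𝒪_K`, then `m·x = ℓ^i·n·x` for some integer `n`.  Consequently
`⟨x⟩` is a direct summand of `𝔭^{-(2b-1)}/𝒪_K`. -/
theorem pure_subgroup_of_ramified
    (K : Type*) [Field K] [Algebra ℚ K]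
    (hdim : Module.finrank ℚ K = 2) (himag : IsEmpty (K →+* ℝ))
    (ℓ : ℕ) (hℓ : ℓ.Prime)
    (𝔭 : Ideal (ringOfInt K)) (h𝔭 : 𝔭.IsPrime) (h𝔭bot : 𝔭 ≠ ⊥)
    (hram : 𝔭 ^ 2 = Ideal.span {((ℓ : ℕ) : ringOfInt K)})
    (b : ℕ) (hb : 0 < b) :
    (∀ m : ℕ, 0 < m → ∀ i : ℕ, 0 < i →
      (∃ y ∈ (invPow 𝔭 (2 * b - 1)).map (QuotientAddGroup.mk' (ringOfInt K).toAddSubgroup),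
        (m : ℤ) • ((QuotientAddGroup.mk' (ringOfInt K).toAddSubgroup) (1 / (ℓ : K) ^ (b - 1))) =
          ((ℓ : ℤ) ^ i) • y) →
      ∃ n : ℤ,
        (m : ℤ) • ((QuotientAddGroup.mk' (ringOfInt K).toAddSubgroup) (1 / (ℓ : K) ^ (b - 1))) =
          ((ℓ : ℤ) ^ i * n) •
            ((QuotientAddGroup.mk' (ringOfInt K).toAddSubgroup) (1 / (ℓ : K) ^ (b - 1)))) ∧
    (∃ C : AddSubgroup (K ⧸ (ringOfInt K).toAddSubgroup),
      C ≤ (invPow 𝔭 (2 * b - 1)).map (QuotientAddGroup.mk' (ringOfInt K).toAddSubgroup) ∧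
      (AddSubgroup.zmultiples
        ((QuotientAddGroup.mk' (ringOfInt K).toAddSubgroup) (1 / (ℓ : K) ^ (b - 1)))) ⊓ C = ⊥ ∧
      (AddSubgroup.zmultiples
        ((QuotientAddGroup.mk' (ringOfInt K).toAddSubgroup) (1 / (ℓ : K) ^ (b - 1)))) ⊔ C =
        (invPow 𝔭 (2 * b - 1)).map (QuotientAddGroup.mk' (ringOfInt K).toAddSubgroup)) := by
  have : CharZero K := algebraRat.charZero K
  obtain ⟨hpure, hsummand⟩ :=
    pure_subgroup_of_ramified_general two_ne_zero hℓ.prime.squarefree hram hb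
  exact ⟨fun m _ i _ => isPureIn_zmultiples_iff.1 hpure m (ℓ ^ i), hsummand⟩
end
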